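/- arXiv:2303.15927 — 2 statements merged into one kernel-verified Lean document; each statement's English description precedes it below -/
import Mathlib

section
/- Let g be the simple complex Lie algebra of type G₂. Then there exists an sl₂-triple (e,h,f) in g such that the centralizer g_e has dimension 6, its derived subalgebra [g_e, g_e] has dimension 5, and e ∉ [g_e, g_e]; consequently g_e is the direct sum of the span of e and [g_e, g_e]. -/
namespace PaperStmt

open LieAlgebra Module

variable (R : Type*) {L : Type*} [CommRing R] [LieRing L] [LieAlgebra R L]

/-- The centralizer `g_x = {y ∈ g | ⁅y, x⁆ = 0}` of an element of a Lie algebra,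
as a Lie subalgebra. -/
def centralizerOf (x : L) : LieSubalgebra R L where
  carrier := {y : L | ⁅y, x⁆ = 0}
  add_mem' := fun {a b} (ha : ⁅a, x⁆ = 0) (hb : ⁅b, x⁆ = 0) => by
    show ⁅a + b, x⁆ = 0
    rw [add_lie, ha, hb, add_zero]
  zero_mem' := zero_lie x
  smul_mem' := fun c a (ha : ⁅a, x⁆ = 0) => by
    show ⁅c • a, x⁆ = 0
    rw [smul_lie, ha, smul_zero]
  lie_mem' := fun {a b} (ha : ⁅a, x⁆ = 0) (hb : ⁅b, x⁆ = 0) => by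
    show ⁅⁅a, b⁆, x⁆ = 0
    rw [lie_lie, ha, hb, lie_zero, lie_zero, sub_zero]

/-- The subspace spanned by the brackets `⁅x, y⁆` with `x ∈ A`, `y ∈ B`. -/
def bracketSpan (A B : Submodule R L) : Submodule R L :=
  Submodule.span R {z : L | ∃ x ∈ A, ∃ y ∈ B, z = ⁅x, y⁆}

/-- The derived subalgebra `[k, k]` of a Lie subalgebra `k`, as a subspace of the
ambient Lie algebra: the span of all brackets `⁅a, b⁆` with `a, b ∈ k`. -/
def derivedOf (K : LieSubalgebra R L) : Submodule R L :=
  bracketSpan R K.toSubmodule K.toSubmodule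

/-- An element `e` of a Lie algebra is reachable if `e ∈ [g_e, g_e]`. -/
def IsReachable (e : L) : Prop :=
  e ∈ derivedOf R (centralizerOf R e)

/-- `g(k)`, the `k`-eigenspace of `ad h`. -/
def gradePiece (h : L) (k : ℤ) : Submodule R L :=
  Module.End.eigenspace (LieAlgebra.ad R L h) (k : R)

/-- `g(k)_e = g(k) ∩ g_e`. -/
def gradePieceCent (e h : L) (k : ℤ) : Submodule R L :=
  gradePiece R h k ⊓ (centralizerOf R e).toSubmodule

/-- `g(≥1)_e`, the sum of the subspaces `g(k)_e` over all `k ≥ 1`. -/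
def gradeGeOneCent (e h : L) : Submodule R L :=
  ⨆ k ∈ {k : ℤ | 1 ≤ k}, gradePieceCent R e h k

section Model

attribute [local instance] LieRing.ofAssociativeRing

/-- Serre relations of type `G₂`. -/
structure G2Rel {L : Type*} [LieRing L] [LieAlgebra ℂ L] (e1 e2 h1 h2 f1 f2 : L) : Prop where
  h1e1 : ⁅h1, e1⁆ = (2 : ℂ) • e1
  h1e2 : ⁅h1, e2⁆ = (-3 : ℂ) • e2
  h2e1 : ⁅h2, e1⁆ = (-1 : ℂ) • e1
  h2e2 : ⁅h2, e2⁆ = (2 : ℂ) • e2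
  f1e1 : ⁅f1, e1⁆ = -h1
  f2e2 : ⁅f2, e2⁆ = -h2
  f1e2 : ⁅f1, e2⁆ = 0
  f2e1 : ⁅f2, e1⁆ = 0
  s1 : ⁅e1, ⁅e1, ⁅e1, ⁅e1, e2⁆⁆⁆⁆ = 0
  s2 : ⁅e2, ⁅e1, e2⁆⁆ = 0

namespace G2Rel
variable {L : Type*} [LieRing L] [LieAlgebra ℂ L] {e1 e2 h1 h2 f1 f2 : L}
theorem e2e4 (r : G2Rel e1 e2 h1 h2 f1 f2) :
    ⁅e2, ⁅e1, ⁅e1, e2⁆⁆⁆ = 0 := by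
  rw [leibniz_lie, r.s2, lie_zero, add_zero, ← lie_skew e1 e2, lie_neg, lie_self, neg_zero]

theorem e3e4 (r : G2Rel e1 e2 h1 h2 f1 f2) :
    ⁅⁅e1, e2⁆, ⁅e1, ⁅e1, e2⁆⁆⁆ = - ⁅e2, ⁅e1, ⁅e1, ⁅e1, e2⁆⁆⁆⁆ := by
  have h := leibniz_lie e1 e2 ⁅e1, ⁅e1, e2⁆⁆
  rw [r.e2e4, lie_zero] at h
  exact eq_neg_of_add_eq_zero_left h.symm

theorem e1e6 (r : G2Rel e1 e2 h1 h2 f1 f2) :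
    ⁅e1, ⁅e2, ⁅e1, ⁅e1, ⁅e1, e2⁆⁆⁆⁆⁆ = 0 := by
  have h := leibniz_lie e1 e2 ⁅e1, ⁅e1, ⁅e1, e2⁆⁆⁆
  have h' := leibniz_lie e1 ⁅e1, e2⁆ ⁅e1, ⁅e1, e2⁆⁆
  rw [r.s1, lie_zero, add_zero] at h
  rw [lie_self, zero_add, r.e3e4, lie_neg, ← h] at h'
  have h2 : (2 : ℂ) • ⁅e1, ⁅e2, ⁅e1, ⁅e1, ⁅e1, e2⁆⁆⁆⁆⁆ = 0 := by
    rw [two_smul]; nth_rw 1 [← h']; exact neg_add_cancel _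
  simpa using h2

theorem e2e6 (r : G2Rel e1 e2 h1 h2 f1 f2) :
    ⁅e2, ⁅e2, ⁅e1, ⁅e1, ⁅e1, e2⁆⁆⁆⁆⁆ = 0 := by
  rw [← neg_eq_zero, ← lie_neg, ← r.e3e4, leibniz_lie, r.s2, r.e2e4, zero_lie, lie_zero, add_zero]

theorem h1e3 (r : G2Rel e1 e2 h1 h2 f1 f2) :
    ⁅h1, ⁅e1, e2⁆⁆ = (-1 : ℂ) • ⁅e1, e2⁆ := by
  rw [leibniz_lie, r.h1e1, r.h1e2, smul_lie, lie_smul]; module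
theorem h1e4 (r : G2Rel e1 e2 h1 h2 f1 f2) :
    ⁅h1, ⁅e1, ⁅e1, e2⁆⁆⁆ = (1 : ℂ) • ⁅e1, ⁅e1, e2⁆⁆ := by
  rw [leibniz_lie, r.h1e1, r.h1e3, smul_lie, lie_smul]; module
theorem h2e3 (r : G2Rel e1 e2 h1 h2 f1 f2) :
    ⁅h2, ⁅e1, e2⁆⁆ = (1 : ℂ) • ⁅e1, e2⁆ := by
  rw [leibniz_lie, r.h2e1, r.h2e2, smul_lie, lie_smul]; module
theorem h2e4 (r : G2Rel e1 e2 h1 h2 f1 f2) :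
    ⁅h2, ⁅e1, ⁅e1, e2⁆⁆⁆ = (0 : ℂ) • ⁅e1, ⁅e1, e2⁆⁆ := by
  rw [leibniz_lie, r.h2e1, r.h2e3, smul_lie, lie_smul]; module
theorem h2e5 (r : G2Rel e1 e2 h1 h2 f1 f2) :
    ⁅h2, ⁅e1, ⁅e1, ⁅e1, e2⁆⁆⁆⁆ = (-1 : ℂ) • ⁅e1, ⁅e1, ⁅e1, e2⁆⁆⁆ := by
  rw [leibniz_lie, r.h2e1, r.h2e4, smul_lie, lie_smul]; module

theorem f1e3 (r : G2Rel e1 e2 h1 h2 f1 f2) :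
    ⁅f1, ⁅e1, e2⁆⁆ = (3 : ℂ) • e2 := by
  rw [leibniz_lie, r.f1e1, r.f1e2, neg_lie, r.h1e2, lie_zero]; module
theorem f1e4 (r : G2Rel e1 e2 h1 h2 f1 f2) :
    ⁅f1, ⁅e1, ⁅e1, e2⁆⁆⁆ = (4 : ℂ) • ⁅e1, e2⁆ := by
  rw [leibniz_lie, r.f1e1, r.f1e3, neg_lie, r.h1e3, lie_smul]; module
theorem f1e5 (r : G2Rel e1 e2 h1 h2 f1 f2) :
    ⁅f1, ⁅e1, ⁅e1, ⁅e1, e2⁆⁆⁆⁆ = (3 : ℂ) • ⁅e1, ⁅e1, e2⁆⁆ := by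
  rw [leibniz_lie, r.f1e1, r.f1e4, neg_lie, r.h1e4, lie_smul]; module
theorem f1e6 (r : G2Rel e1 e2 h1 h2 f1 f2) :
    ⁅f1, ⁅e2, ⁅e1, ⁅e1, ⁅e1, e2⁆⁆⁆⁆⁆ = 0 := by
  rw [leibniz_lie, r.f1e2, r.f1e5, zero_lie, lie_smul, r.e2e4]; module
theorem f2e3 (r : G2Rel e1 e2 h1 h2 f1 f2) :
    ⁅f2, ⁅e1, e2⁆⁆ = (-1 : ℂ) • e1 := by
  rw [leibniz_lie, r.f2e1, r.f2e2, lie_neg, lie_skew, r.h2e1, zero_lie]; module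
theorem f2e4 (r : G2Rel e1 e2 h1 h2 f1 f2) :
    ⁅f2, ⁅e1, ⁅e1, e2⁆⁆⁆ = 0 := by
  rw [leibniz_lie, r.f2e1, r.f2e3, lie_smul, lie_self, zero_lie]; module
theorem f2e5 (r : G2Rel e1 e2 h1 h2 f1 f2) :
    ⁅f2, ⁅e1, ⁅e1, ⁅e1, e2⁆⁆⁆⁆ = 0 := by
  rw [leibniz_lie, r.f2e1, r.f2e4, lie_zero, zero_lie]; module
theorem f2e6 (r : G2Rel e1 e2 h1 h2 f1 f2) :
    ⁅f2, ⁅e2, ⁅e1, ⁅e1, ⁅e1, e2⁆⁆⁆⁆⁆ = (1 : ℂ) • ⁅e1, ⁅e1, ⁅e1, e2⁆⁆⁆ := by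
  rw [leibniz_lie, r.f2e2, r.f2e5, lie_zero, neg_lie, r.h2e5]; module

end G2Rel

def m_e1 : Matrix (Fin 7) (Fin 7) ℤ :=
  !![0, 1, 0, 0, 0, 0, 0;
     0, 0, 0, 0, 0, 0, 0;
     0, 0, 0, 2, 0, 0, 0;
     0, 0, 0, 0, 1, 0, 0;
     0, 0, 0, 0, 0, 0, 0;
     0, 0, 0, 0, 0, 0, 1;
     0, 0, 0, 0, 0, 0, 0]

def m_e2 : Matrix (Fin 7) (Fin 7) ℤ :=
  !![0, 0, 0, 0, 0, 0, 0;
     0, 0, 1, 0, 0, 0, 0;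
     0, 0, 0, 0, 0, 0, 0;
     0, 0, 0, 0, 0, 0, 0;
     0, 0, 0, 0, 0, 1, 0;
     0, 0, 0, 0, 0, 0, 0;
     0, 0, 0, 0, 0, 0, 0]

def m_e3 : Matrix (Fin 7) (Fin 7) ℤ :=
  !![0, 0, 1, 0, 0, 0, 0;
     0, 0, 0, -2, 0, 0, 0;
     0, 0, 0, 0, 0, 0, 0;
     0, 0, 0, 0, 0, 1, 0;
     0, 0, 0, 0, 0, 0, -1;
     0, 0, 0, 0, 0, 0, 0;
     0, 0, 0, 0, 0, 0, 0]

def m_e4 : Matrix (Fin 7) (Fin 7) ℤ :=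
  !![0, 0, 0, -4, 0, 0, 0;
     0, 0, 0, 0, 2, 0, 0;
     0, 0, 0, 0, 0, 2, 0;
     0, 0, 0, 0, 0, 0, -2;
     0, 0, 0, 0, 0, 0, 0;
     0, 0, 0, 0, 0, 0, 0;
     0, 0, 0, 0, 0, 0, 0]

def m_e5 : Matrix (Fin 7) (Fin 7) ℤ :=
  !![0, 0, 0, 0, 6, 0, 0;
     0, 0, 0, 0, 0, 0, 0;
     0, 0, 0, 0, 0, 0, -6;
     0, 0, 0, 0, 0, 0, 0;
     0, 0, 0, 0, 0, 0, 0;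
     0, 0, 0, 0, 0, 0, 0;
     0, 0, 0, 0, 0, 0, 0]

def m_e6 : Matrix (Fin 7) (Fin 7) ℤ :=
  !![0, 0, 0, 0, 0, -6, 0;
     0, 0, 0, 0, 0, 0, -6;
     0, 0, 0, 0, 0, 0, 0;
     0, 0, 0, 0, 0, 0, 0;
     0, 0, 0, 0, 0, 0, 0;
     0, 0, 0, 0, 0, 0, 0;
     0, 0, 0, 0, 0, 0, 0]

def m_h1 : Matrix (Fin 7) (Fin 7) ℤ :=
  !![1, 0, 0, 0, 0, 0, 0;
     0, -1, 0, 0, 0, 0, 0;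
     0, 0, 2, 0, 0, 0, 0;
     0, 0, 0, 0, 0, 0, 0;
     0, 0, 0, 0, -2, 0, 0;
     0, 0, 0, 0, 0, 1, 0;
     0, 0, 0, 0, 0, 0, -1]

def m_h2 : Matrix (Fin 7) (Fin 7) ℤ :=
  !![0, 0, 0, 0, 0, 0, 0;
     0, 1, 0, 0, 0, 0, 0;
     0, 0, -1, 0, 0, 0, 0;
     0, 0, 0, 0, 0, 0, 0;
     0, 0, 0, 0, 1, 0, 0;
     0, 0, 0, 0, 0, -1, 0;
     0, 0, 0, 0, 0, 0, 0]

def m_f1 : Matrix (Fin 7) (Fin 7) ℤ :=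
  !![0, 0, 0, 0, 0, 0, 0;
     1, 0, 0, 0, 0, 0, 0;
     0, 0, 0, 0, 0, 0, 0;
     0, 0, 1, 0, 0, 0, 0;
     0, 0, 0, 2, 0, 0, 0;
     0, 0, 0, 0, 0, 0, 0;
     0, 0, 0, 0, 0, 1, 0]

def m_f2 : Matrix (Fin 7) (Fin 7) ℤ :=
  !![0, 0, 0, 0, 0, 0, 0;
     0, 0, 0, 0, 0, 0, 0;
     0, 1, 0, 0, 0, 0, 0;
     0, 0, 0, 0, 0, 0, 0;
     0, 0, 0, 0, 0, 0, 0;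
     0, 0, 0, 0, 1, 0, 0;
     0, 0, 0, 0, 0, 0, 0]

def m_f3 : Matrix (Fin 7) (Fin 7) ℤ :=
  !![0, 0, 0, 0, 0, 0, 0;
     0, 0, 0, 0, 0, 0, 0;
     -1, 0, 0, 0, 0, 0, 0;
     0, 1, 0, 0, 0, 0, 0;
     0, 0, 0, 0, 0, 0, 0;
     0, 0, 0, -2, 0, 0, 0;
     0, 0, 0, 0, 1, 0, 0]

def m_f4 : Matrix (Fin 7) (Fin 7) ℤ :=
  !![0, 0, 0, 0, 0, 0, 0;
     0, 0, 0, 0, 0, 0, 0;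
     0, 0, 0, 0, 0, 0, 0;
     -2, 0, 0, 0, 0, 0, 0;
     0, 2, 0, 0, 0, 0, 0;
     0, 0, 2, 0, 0, 0, 0;
     0, 0, 0, -4, 0, 0, 0]

def m_f5 : Matrix (Fin 7) (Fin 7) ℤ :=
  !![0, 0, 0, 0, 0, 0, 0;
     0, 0, 0, 0, 0, 0, 0;
     0, 0, 0, 0, 0, 0, 0;
     0, 0, 0, 0, 0, 0, 0;
     -6, 0, 0, 0, 0, 0, 0;
     0, 0, 0, 0, 0, 0, 0;
     0, 0, 6, 0, 0, 0, 0]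

def m_f6 : Matrix (Fin 7) (Fin 7) ℤ :=
  !![0, 0, 0, 0, 0, 0, 0;
     0, 0, 0, 0, 0, 0, 0;
     0, 0, 0, 0, 0, 0, 0;
     0, 0, 0, 0, 0, 0, 0;
     0, 0, 0, 0, 0, 0, 0;
     -6, 0, 0, 0, 0, 0, 0;
     0, -6, 0, 0, 0, 0, 0]

/-- Entrywise cast from integer matrices to complex matrices. -/
noncomputable def castM : Matrix (Fin 7) (Fin 7) ℤ →+* Matrix (Fin 7) (Fin 7) ℂ :=
  (Int.castRingHom ℂ).mapMatrix

theorem castM_apply (A : Matrix (Fin 7) (Fin 7) ℤ) (i j) : castM A i j = (A i j : ℂ) := rfl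

theorem castM_lie (A B : Matrix (Fin 7) (Fin 7) ℤ) :
    ⁅castM A, castM B⁆ = castM (A * B - B * A) := by
  rw [Ring.lie_def, map_sub, map_mul, map_mul]

open CartanMatrix in
/-- Images of the generators in the 7-dimensional representation. -/
def genM : Generators (Fin 2) → Matrix (Fin 7) (Fin 7) ℤ
  | Generators.H i => ![m_h1, m_h2] i
  | Generators.E i => ![m_e1, m_e2] i
  | Generators.F i => ![m_f1, m_f2] i

open CartanMatrix in
/-- The 7-dimensional representation of the free Lie algebra. -/
noncomputable def rho0 :
    FreeLieAlgebra ℂ (Generators (Fin 2)) →ₗ⁅ℂ⁆ Matrix (Fin 7) (Fin 7) ℂ :=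
  FreeLieAlgebra.lift ℂ fun x => castM (genM x)

theorem rho0_of (x) : rho0 (FreeLieAlgebra.of ℂ x) = castM (genM x) :=
  FreeLieAlgebra.lift_of_apply _ x

open CartanMatrix in
theorem rho0_rel (x) (hx : x ∈ Relations.toSet ℂ G₂) : rho0 x = 0 := by
  have key : ∀ A : Matrix (Fin 7) (Fin 7) ℤ, A = 0 → castM A = 0 := by
    rintro _ rfl; exact map_zero _
  rcases hx with (((((⟨⟨i, j⟩, rfl⟩ | ⟨⟨i, j⟩, rfl⟩) | ⟨⟨i, j⟩, rfl⟩) | ⟨⟨i, j⟩, rfl⟩) |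
    ⟨⟨i, j⟩, rfl⟩) | ⟨⟨i, j⟩, rfl⟩)
  · simp only [Relations.HH, Function.uncurry, Function.comp, LieHom.map_lie, rho0_of, castM_lie]
    apply key
    revert i j; decide +kernel
  · simp only [Relations.EF, Function.uncurry, Function.comp]
    split_ifs with h
    · simp only [LieHom.map_lie, map_sub, rho0_of, castM_lie]
      rw [← map_sub castM, ← map_sub castM]
      apply key
      clear h
      revert i; decide +kernel
    · simp only [LieHom.map_lie, rho0_of, castM_lie]
      apply key
      revert i j; decide +kernel
  · simp only [Relations.HE, Function.uncurry, Function.comp, LieHom.map_lie, map_sub, map_zsmul,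
      rho0_of, castM_lie]
    rw [← map_zsmul castM, ← map_sub castM, ← map_sub castM]
    apply key
    revert i j; decide +kernel
  · simp only [Relations.HF, Function.uncurry, Function.comp, LieHom.map_lie, map_add, map_zsmul,
      rho0_of, castM_lie]
    rw [← map_zsmul castM, ← map_add castM]
    apply key
    revert i j; decide +kernel
  · have h2 : (-2 : ℤ).toNat = 0 := rfl
    have h3 : (3 : ℤ).toNat = 3 := rfl
    fin_cases i <;> fin_cases j <;>
    simp only [Relations.adE, Function.uncurry, Function.comp, G₂] <;>
    simp [h2, h3, pow_succ, rho0_of, castM_lie, -lie_self, -map_sub, -map_mul] <;>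
    (apply key; decide +kernel)
  · have h2 : (-2 : ℤ).toNat = 0 := rfl
    have h3 : (3 : ℤ).toNat = 3 := rfl
    fin_cases i <;> fin_cases j <;>
    simp only [Relations.adF, Function.uncurry, Function.comp, G₂] <;>
    simp [h2, h3, pow_succ, rho0_of, castM_lie, -lie_self, -map_sub, -map_mul] <;>
    (apply key; decide +kernel)

open CartanMatrix in
/-- The projection from the free Lie algebra. -/
noncomputable def proj : FreeLieAlgebra ℂ (Generators (Fin 2)) →ₗ⁅ℂ⁆ g₂ ℂ :=
  { (Relations.toIdeal ℂ G₂).toSubmodule.mkQ with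
    map_lie' := fun {_ _} => rfl }

theorem proj_surj : Function.Surjective proj :=
  Submodule.mkQ_surjective _

open CartanMatrix in
theorem proj_rel (x) (hx : x ∈ Relations.toSet ℂ G₂) : proj x = 0 :=
  (Submodule.Quotient.mk_eq_zero _).2 (LieSubmodule.subset_lieSpan hx)

open CartanMatrix in
theorem ideal_le : (Relations.toIdeal ℂ G₂).toSubmodule ≤
    LinearMap.ker (rho0 : _ →ₗ[ℂ] Matrix (Fin 7) (Fin 7) ℂ) := by
  have : Relations.toIdeal ℂ G₂ ≤ rho0.ker := by
    rw [Relations.toIdeal, LieSubmodule.lieSpan_le]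
    intro x hx
    exact rho0.mem_ker.2 (rho0_rel x hx)
  intro x hx
  exact rho0.mem_ker.1 (this hx)

open CartanMatrix in
/-- The 7-dimensional representation of `g₂`, as a linear map. -/
noncomputable def rho : g₂ ℂ →ₗ[ℂ] Matrix (Fin 7) (Fin 7) ℂ :=
  (Relations.toIdeal ℂ G₂).toSubmodule.liftQ
    (rho0 : _ →ₗ[ℂ] Matrix (Fin 7) (Fin 7) ℂ) ideal_le

theorem rho_proj (x) : rho (proj x) = rho0 x := rfl

theorem rho_lie (x y : g₂ ℂ) : rho ⁅x, y⁆ = ⁅rho x, rho y⁆ := by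
  obtain ⟨x, rfl⟩ := proj_surj x
  obtain ⟨y, rfl⟩ := proj_surj y
  rw [← LieHom.map_lie, rho_proj, rho_proj, rho_proj, LieHom.map_lie]

open CartanMatrix in
/-- The generator `E i`. -/
noncomputable def gE (i : Fin 2) : g₂ ℂ := proj (FreeLieAlgebra.of ℂ (Generators.E i))
open CartanMatrix in
/-- The generator `F i`. -/
noncomputable def gF (i : Fin 2) : g₂ ℂ := proj (FreeLieAlgebra.of ℂ (Generators.F i))
open CartanMatrix in
/-- The generator `H i`. -/
noncomputable def gH (i : Fin 2) : g₂ ℂ := proj (FreeLieAlgebra.of ℂ (Generators.H i))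

open CartanMatrix in
theorem g_HE (i j) : ⁅gH i, gE j⁆ = (G₂ i j : ℂ) • gE j := by
  have := proj_rel (Relations.HE ℂ G₂ (i, j)) (by left; left; left; right; exact ⟨_, rfl⟩)
  simp only [Relations.HE, Function.uncurry, Function.comp, LieHom.map_lie, map_sub,
    map_zsmul] at this
  rw [Int.cast_smul_eq_zsmul]
  exact sub_eq_zero.1 this

open CartanMatrix in
theorem g_HF (i j) : ⁅gH i, gF j⁆ = -(G₂ i j : ℂ) • gF j := by
  have := proj_rel (Relations.HF ℂ G₂ (i, j)) (by left; left; right; exact ⟨_, rfl⟩)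
  simp only [Relations.HF, Function.uncurry, Function.comp, LieHom.map_lie, map_add,
    map_zsmul] at this
  rw [neg_smul, Int.cast_smul_eq_zsmul]
  exact eq_neg_of_add_eq_zero_left this

open CartanMatrix in
theorem g_HH (i j) : ⁅gH i, gH j⁆ = 0 := by
  have := proj_rel (Relations.HH ℂ (i, j)) (by left; left; left; left; left; exact ⟨_, rfl⟩)
  simp only [Relations.HH, Function.uncurry, Function.comp, LieHom.map_lie] at this
  exact this

open CartanMatrix in
theorem g_EF_eq (i) : ⁅gE i, gF i⁆ = gH i := by
  have := proj_rel (Relations.EF ℂ (i, i)) (by left; left; left; left; right; exact ⟨_, rfl⟩)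
  simp only [Relations.EF, Function.uncurry, Function.comp, if_true, LieHom.map_lie,
    map_sub] at this
  exact sub_eq_zero.1 this

open CartanMatrix in
theorem g_EF_ne (i j) (h : i ≠ j) : ⁅gE i, gF j⁆ = 0 := by
  have := proj_rel (Relations.EF ℂ (i, j)) (by left; left; left; left; right; exact ⟨_, rfl⟩)
  simp only [Relations.EF, Function.uncurry, Function.comp, if_neg h, LieHom.map_lie] at this
  exact this

open CartanMatrix in
theorem g_sE1 : ⁅gE 0, ⁅gE 0, ⁅gE 0, ⁅gE 0, gE 1⁆⁆⁆⁆ = 0 := by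
  have := proj_rel (Relations.adE ℂ G₂ (0, 1)) (by left; right; exact ⟨_, rfl⟩)
  have h3 : (3 : ℤ).toNat = 3 := rfl
  simp [Relations.adE, G₂, h3, pow_succ] at this
  exact this
open CartanMatrix in
theorem g_sE2 : ⁅gE 1, ⁅gE 1, gE 0⁆⁆ = 0 := by
  have := proj_rel (Relations.adE ℂ G₂ (1, 0)) (by left; right; exact ⟨_, rfl⟩)
  simp [Relations.adE, G₂] at this
  exact this
open CartanMatrix in
theorem g_sF1 : ⁅gF 0, ⁅gF 0, ⁅gF 0, ⁅gF 0, gF 1⁆⁆⁆⁆ = 0 := by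
  have := proj_rel (Relations.adF ℂ G₂ (0, 1)) (by right; exact ⟨_, rfl⟩)
  have h3 : (3 : ℤ).toNat = 3 := rfl
  simp [Relations.adF, G₂, h3, pow_succ] at this
  exact this
open CartanMatrix in
theorem g_sF2 : ⁅gF 1, ⁅gF 1, gF 0⁆⁆ = 0 := by
  have := proj_rel (Relations.adF ℂ G₂ (1, 0)) (by right; exact ⟨_, rfl⟩)
  simp [Relations.adF, G₂] at this
  exact this

theorem relE : G2Rel (gE 0) (gE 1) (gH 0) (gH 1) (gF 0) (gF 1) where
  h1e1 := by rw [g_HE]; simp [CartanMatrix.G₂]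
  h1e2 := by rw [g_HE]; simp [CartanMatrix.G₂]
  h2e1 := by rw [g_HE]; simp [CartanMatrix.G₂]
  h2e2 := by rw [g_HE]; simp [CartanMatrix.G₂]
  f1e1 := by rw [← lie_skew, g_EF_eq]
  f2e2 := by rw [← lie_skew, g_EF_eq]
  f1e2 := by rw [← lie_skew, g_EF_ne _ _ (by decide), neg_zero]
  f2e1 := by rw [← lie_skew, g_EF_ne _ _ (by decide), neg_zero]
  s1 := g_sE1
  s2 := by rw [← lie_skew (gE 0), lie_neg, g_sE2, neg_zero]

theorem relF : G2Rel (gF 0) (gF 1) (-gH 0) (-gH 1) (gE 0) (gE 1) where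
  h1e1 := by rw [neg_lie, g_HF]; simp [CartanMatrix.G₂]
  h1e2 := by rw [neg_lie, g_HF]; simp [CartanMatrix.G₂]
  h2e1 := by rw [neg_lie, g_HF]; simp [CartanMatrix.G₂]
  h2e2 := by rw [neg_lie, g_HF]; simp [CartanMatrix.G₂]
  f1e1 := by rw [neg_neg, g_EF_eq]
  f2e2 := by rw [neg_neg, g_EF_eq]
  f1e2 := g_EF_ne _ _ (by decide)
  f2e1 := g_EF_ne _ _ (by decide)
  s1 := g_sF1
  s2 := by rw [← lie_skew (gF 0), lie_neg, g_sF2, neg_zero]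

theorem eq_top_of_gens (S : LieSubalgebra ℂ (g₂ ℂ)) (hE : ∀ i, gE i ∈ S) (hF : ∀ i, gF i ∈ S) :
    ∀ x, x ∈ S := by
  have hS : ∀ x, proj (FreeLieAlgebra.of ℂ x) ∈ S := by
    rintro (i | i | i)
    · have h := S.lie_mem (hE i) (hF i)
      rw [g_EF_eq] at h
      exact h
    · exact hE i
    · exact hF i
  let φ : FreeLieAlgebra ℂ _ →ₗ⁅ℂ⁆ S := FreeLieAlgebra.lift ℂ fun x => ⟨_, hS x⟩
  have h : S.incl.comp φ = proj := by
    apply FreeLieAlgebra.hom_ext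
    intro x
    simp [φ]
  intro x
  obtain ⟨y, rfl⟩ := proj_surj x
  rw [← h]
  exact (φ y).2

/-- The positive root vectors built from `a = e₁`, `b = e₂`. -/
noncomputable def rootVec (a b : g₂ ℂ) : Fin 6 → g₂ ℂ :=
  ![a, b, ⁅a, b⁆, ⁅a, ⁅a, b⁆⁆, ⁅a, ⁅a, ⁅a, b⁆⁆⁆, ⁅b, ⁅a, ⁅a, ⁅a, b⁆⁆⁆⁆]

/-- The basis of `g₂`: root vectors and coroots. -/
noncomputable def bas : Fin 14 → g₂ ℂ :=
  ![gE 0, gE 1, ⁅gE 0, gE 1⁆, ⁅gE 0, ⁅gE 0, gE 1⁆⁆, ⁅gE 0, ⁅gE 0, ⁅gE 0, gE 1⁆⁆⁆,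
    ⁅gE 1, ⁅gE 0, ⁅gE 0, ⁅gE 0, gE 1⁆⁆⁆⁆, gH 0, gH 1,
    gF 0, gF 1, ⁅gF 0, gF 1⁆, ⁅gF 0, ⁅gF 0, gF 1⁆⁆, ⁅gF 0, ⁅gF 0, ⁅gF 0, gF 1⁆⁆⁆,
    ⁅gF 1, ⁅gF 0, ⁅gF 0, ⁅gF 0, gF 1⁆⁆⁆⁆]

theorem e_root {e1 e2 h1 h2 f1 f2 : g₂ ℂ} (r : G2Rel e1 e2 h1 h2 f1 f2)
    (W : Submodule ℂ (g₂ ℂ)) (hW : ∀ i, rootVec e1 e2 i ∈ W) (hh1 : h1 ∈ W) (hh2 : h2 ∈ W)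
    (i : Fin 6) : ⁅e1, rootVec e1 e2 i⁆ ∈ W ∧ ⁅e2, rootVec e1 e2 i⁆ ∈ W ∧
      ⁅f1, rootVec e1 e2 i⁆ ∈ W ∧ ⁅f2, rootVec e1 e2 i⁆ ∈ W := by
  have w0 : e1 ∈ W := hW 0
  have w1 : e2 ∈ W := hW 1
  have w2 : ⁅e1, e2⁆ ∈ W := hW 2
  have w3 : ⁅e1, ⁅e1, e2⁆⁆ ∈ W := hW 3
  have w4 : ⁅e1, ⁅e1, ⁅e1, e2⁆⁆⁆ ∈ W := hW 4
  have w5 : ⁅e2, ⁅e1, ⁅e1, ⁅e1, e2⁆⁆⁆⁆ ∈ W := hW 5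
  have w2' : ⁅e2, e1⁆ ∈ W := by rw [← lie_skew]; exact W.neg_mem w2
  fin_cases i
  · change ⁅e1, e1⁆ ∈ W ∧ ⁅e2, e1⁆ ∈ W ∧ ⁅f1, e1⁆ ∈ W ∧ ⁅f2, e1⁆ ∈ W
    rw [lie_self, r.f1e1, r.f2e1]
    exact ⟨W.zero_mem, w2', W.neg_mem hh1, W.zero_mem⟩
  · change ⁅e1, e2⁆ ∈ W ∧ ⁅e2, e2⁆ ∈ W ∧ ⁅f1, e2⁆ ∈ W ∧ ⁅f2, e2⁆ ∈ W
    rw [lie_self, r.f1e2, r.f2e2]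
    exact ⟨w2, W.zero_mem, W.zero_mem, W.neg_mem hh2⟩
  · change ⁅e1, ⁅e1, e2⁆⁆ ∈ W ∧ ⁅e2, ⁅e1, e2⁆⁆ ∈ W ∧ ⁅f1, ⁅e1, e2⁆⁆ ∈ W ∧ ⁅f2, ⁅e1, e2⁆⁆ ∈ W
    rw [r.s2, r.f1e3, r.f2e3]
    exact ⟨w3, W.zero_mem, W.smul_mem _ w1, W.smul_mem _ w0⟩
  · change ⁅e1, ⁅e1, ⁅e1, e2⁆⁆⁆ ∈ W ∧ ⁅e2, ⁅e1, ⁅e1, e2⁆⁆⁆ ∈ W ∧ ⁅f1, ⁅e1, ⁅e1, e2⁆⁆⁆ ∈ W ∧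
      ⁅f2, ⁅e1, ⁅e1, e2⁆⁆⁆ ∈ W
    rw [r.e2e4, r.f1e4, r.f2e4]
    exact ⟨w4, W.zero_mem, W.smul_mem _ w2, W.zero_mem⟩
  · change ⁅e1, ⁅e1, ⁅e1, ⁅e1, e2⁆⁆⁆⁆ ∈ W ∧ ⁅e2, ⁅e1, ⁅e1, ⁅e1, e2⁆⁆⁆⁆ ∈ W ∧
      ⁅f1, ⁅e1, ⁅e1, ⁅e1, e2⁆⁆⁆⁆ ∈ W ∧ ⁅f2, ⁅e1, ⁅e1, ⁅e1, e2⁆⁆⁆⁆ ∈ W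
    rw [r.s1, r.f1e5, r.f2e5]
    exact ⟨W.zero_mem, w5, W.smul_mem _ w3, W.zero_mem⟩
  · change ⁅e1, ⁅e2, ⁅e1, ⁅e1, ⁅e1, e2⁆⁆⁆⁆⁆ ∈ W ∧ ⁅e2, ⁅e2, ⁅e1, ⁅e1, ⁅e1, e2⁆⁆⁆⁆⁆ ∈ W ∧
      ⁅f1, ⁅e2, ⁅e1, ⁅e1, ⁅e1, e2⁆⁆⁆⁆⁆ ∈ W ∧ ⁅f2, ⁅e2, ⁅e1, ⁅e1, ⁅e1, e2⁆⁆⁆⁆⁆ ∈ W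
    rw [r.e1e6, r.e2e6, r.f1e6, r.f2e6]
    exact ⟨W.zero_mem, W.zero_mem, W.zero_mem, W.smul_mem _ w4⟩

theorem span_top : Submodule.span ℂ (Set.range bas) = ⊤ := by
  set W := Submodule.span ℂ (Set.range bas) with hWdef
  have hb : ∀ i, bas i ∈ W := fun i => Submodule.subset_span ⟨i, rfl⟩
  have hE : ∀ i, rootVec (gE 0) (gE 1) i ∈ W := by
    intro i; fin_cases i
    exacts [hb 0, hb 1, hb 2, hb 3, hb 4, hb 5]
  have hF : ∀ i, rootVec (gF 0) (gF 1) i ∈ W := by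
    intro i; fin_cases i
    exacts [hb 8, hb 9, hb 10, hb 11, hb 12, hb 13]
  have hH : ∀ i, gH i ∈ W := by
    intro i; fin_cases i
    exacts [hb 6, hb 7]
  have hE' : ∀ i, gE i ∈ W := by
    intro i; fin_cases i
    exacts [hE 0, hE 1]
  have hF' : ∀ i, gF i ∈ W := by
    intro i; fin_cases i
    exacts [hF 0, hF 1]
  have ext : ∀ x : g₂ ℂ, (∀ i, ⁅x, rootVec (gE 0) (gE 1) i⁆ ∈ W) → (∀ i, ⁅x, gH i⁆ ∈ W) →
      (∀ i, ⁅x, rootVec (gF 0) (gF 1) i⁆ ∈ W) → ∀ w ∈ W, ⁅x, w⁆ ∈ W := by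
    intro x h1 h2 h3
    have : W ≤ W.comap (LieAlgebra.ad ℂ (g₂ ℂ) x) := by
      conv_lhs => rw [hWdef]
      rw [Submodule.span_le]
      rintro _ ⟨i, rfl⟩
      change ⁅x, bas i⁆ ∈ W
      fin_cases i
      exacts [h1 0, h1 1, h1 2, h1 3, h1 4, h1 5, h2 0, h2 1, h3 0, h3 1, h3 2, h3 3, h3 4, h3 5]
    exact this
  let N : LieSubalgebra ℂ (g₂ ℂ) :=
    { carrier := {x | ∀ w ∈ W, ⁅x, w⁆ ∈ W}
      add_mem' := fun {a b} ha hb w hw => by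
        rw [add_lie]; exact W.add_mem (ha w hw) (hb w hw)
      zero_mem' := fun w hw => by rw [zero_lie]; exact W.zero_mem
      smul_mem' := fun c a ha w hw => by rw [smul_lie]; exact W.smul_mem _ (ha w hw)
      lie_mem' := fun {a b} ha hb w hw => by
        rw [lie_lie]; exact W.sub_mem (ha _ (hb w hw)) (hb _ (ha w hw)) }
  have tE := e_root relE W hE (hH 0) (hH 1)
  have tF := e_root relF W hF (W.neg_mem (hH 0)) (W.neg_mem (hH 1))
  have hEH : ∀ i j, ⁅gE i, gH j⁆ ∈ W := fun i j => by
    rw [← lie_skew, g_HE]; exact W.neg_mem (W.smul_mem _ (hE' i))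
  have hFH : ∀ i j, ⁅gF i, gH j⁆ ∈ W := fun i j => by
    rw [← lie_skew, g_HF]; exact W.neg_mem (W.smul_mem _ (hF' i))
  have hN : ∀ x, x ∈ N := by
    apply eq_top_of_gens N
    · intro i; fin_cases i
      · exact ext (gE 0) (fun i => (tE i).1) (hEH 0) (fun i => (tF i).2.2.1)
      · exact ext (gE 1) (fun i => (tE i).2.1) (hEH 1) (fun i => (tF i).2.2.2)
    · intro i; fin_cases i
      · exact ext (gF 0) (fun i => (tE i).2.2.1) (hFH 0) (fun i => (tF i).1)
      · exact ext (gF 1) (fun i => (tE i).2.2.2) (hFH 1) (fun i => (tF i).2.1)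
  let S : LieSubalgebra ℂ (g₂ ℂ) := { W with lie_mem' := fun {a b} _ hb => hN a b hb }
  rw [eq_top_iff]
  intro x _
  exact eq_top_of_gens S hE' hF' x

/-- The matrices of the basis vectors. -/
def basM : Fin 14 → Matrix (Fin 7) (Fin 7) ℤ :=
  ![m_e1, m_e2, m_e3, m_e4, m_e5, m_e6, m_h1, m_h2, m_f1, m_f2, m_f3, m_f4, m_f5, m_f6]

theorem rho_lie_cast {x y : g₂ ℂ} {A B C : Matrix (Fin 7) (Fin 7) ℤ} (hx : rho x = castM A)
    (hy : rho y = castM B) (h : A * B - B * A = C) : rho ⁅x, y⁆ = castM C := by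
  rw [rho_lie, hx, hy, castM_lie, h]

theorem rho_bas (i) : rho (bas i) = castM (basM i) := by
  have e1 : rho (gE 0) = castM m_e1 := rho0_of _
  have e2 : rho (gE 1) = castM m_e2 := rho0_of _
  have f1 : rho (gF 0) = castM m_f1 := rho0_of _
  have f2 : rho (gF 1) = castM m_f2 := rho0_of _
  have h1 : rho (gH 0) = castM m_h1 := rho0_of _
  have h2 : rho (gH 1) = castM m_h2 := rho0_of _
  have e3 := rho_lie_cast (C := m_e3) e1 e2 (by decide +kernel)
  have e4 := rho_lie_cast (C := m_e4) e1 e3 (by decide +kernel)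
  have e5 := rho_lie_cast (C := m_e5) e1 e4 (by decide +kernel)
  have e6 := rho_lie_cast (C := m_e6) e2 e5 (by decide +kernel)
  have f3 := rho_lie_cast (C := m_f3) f1 f2 (by decide +kernel)
  have f4 := rho_lie_cast (C := m_f4) f1 f3 (by decide +kernel)
  have f5 := rho_lie_cast (C := m_f5) f1 f4 (by decide +kernel)
  have f6 := rho_lie_cast (C := m_f6) f2 f5 (by decide +kernel)
  fin_cases i
  exacts [e1, e2, e3, e4, e5, e6, h1, h2, f1, f2, f3, f4, f5, f6]

theorem linInd_cast : LinearIndependent ℂ fun i => castM (basM i) := by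
  rw [Fintype.linearIndependent_iff]
  intro g hg
  have key : ∀ a b, ∑ i, g i * ((basM i a b : ℤ) : ℂ) = 0 := by
    intro a b
    have := congrFun (congrFun hg a) b
    simpa [Matrix.sum_apply, castM_apply] using this
  have k0 := key 0 1
  have k1 := key 1 2
  have k2 := key 0 2
  have k3 := key 0 3
  have k4 := key 0 4
  have k5 := key 0 5
  have k6 := key 0 0
  have k7 := key 1 1
  have k8 := key 1 0
  have k9 := key 2 1
  have k10 := key 2 0
  have k11 := key 3 0
  have k12 := key 4 0
  have k13 := key 5 0
  simp [Fin.sum_univ_succ, basM, m_e1, m_e2, m_e3, m_e4, m_e5, m_e6, m_h1, m_h2,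
    m_f1, m_f2, m_f3, m_f4, m_f5, m_f6] at k0 k1 k2 k3 k4 k5 k6 k7 k8 k9 k10 k11 k12 k13
  have k7' : g 7 = 0 := by rw [k6] at k7; simpa using k7
  intro i
  fin_cases i
  exacts [k0, k1, k2, k3, k4, k5, k6, k7', k8, k9, k10, k11, k12, k13]

theorem linInd_bas : LinearIndependent ℂ bas := by
  apply LinearIndependent.of_comp rho
  have : (rho ∘ bas) = fun i => castM (basM i) := funext rho_bas
  rw [this]
  exact linInd_cast

theorem rho_inj : Function.Injective rho := by
  rw [← LinearMap.ker_eq_bot, LinearMap.ker_eq_bot']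
  intro x hx
  have hm : x ∈ Submodule.span ℂ (Set.range bas) := span_top ▸ Submodule.mem_top
  obtain ⟨c, rfl⟩ := (Submodule.mem_span_range_iff_exists_fun ℂ).1 hm
  simp only [map_sum, map_smul, rho_bas] at hx
  have := Fintype.linearIndependent_iff.1 linInd_cast c hx
  simp [this]

/-- The five vectors spanning the derived algebra of the centralizer. -/
noncomputable def vv : Fin 5 → g₂ ℂ :=
  ![bas 4, bas 5, bas 9, bas 13, bas 6 + (2 : ℂ) • bas 7]

/-- The matrices of `vv`. -/
def vvM : Fin 5 → Matrix (Fin 7) (Fin 7) ℤ :=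
  ![m_e5, m_e6, m_f2, m_f6, m_h1 + 2 * m_h2]

/-- The six vectors spanning the centralizer. -/
noncomputable def uu : Fin 6 → g₂ ℂ := Fin.cons (gE 0) vv

/-- The matrices of `uu`. -/
def uuM : Fin 6 → Matrix (Fin 7) (Fin 7) ℤ := Fin.cons m_e1 vvM

theorem rho_vv (i) : rho (vv i) = castM (vvM i) := by
  fin_cases i
  · exact rho_bas 4
  · exact rho_bas 5
  · exact rho_bas 9
  · exact rho_bas 13
  · change rho (bas 6 + (2 : ℂ) • bas 7) = castM (m_h1 + 2 * m_h2)
    rw [map_add, map_smul, rho_bas, rho_bas, map_add, map_mul, map_ofNat, two_smul, two_mul]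
    rfl

theorem rho_uu (i) : rho (uu i) = castM (uuM i) := by
  refine Fin.cases ?_ (fun i => ?_) i
  · exact rho_bas 0
  · exact rho_vv i

theorem linInd_uu : LinearIndependent ℂ uu := by
  rw [Fintype.linearIndependent_iff]
  intro g hg
  have key : ∀ a b, ∑ i, g i * ((uuM i a b : ℤ) : ℂ) = 0 := by
    intro a b
    have := congrArg rho hg
    simp only [map_sum, map_smul, rho_uu, map_zero] at this
    have := congrFun (congrFun this a) b
    simpa [Matrix.sum_apply, castM_apply] using this
  have e : ∀ (p : Fin 6) (a b : Fin 7), (∀ i, i ≠ p → uuM i a b = 0) → uuM p a b ≠ 0 →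
      g p = 0 := by
    intro p a b h h'
    have k := key a b
    rw [Finset.sum_eq_single p (fun i _ hi => by rw [h i hi]; simp) (by simp)] at k
    exact (mul_eq_zero.1 k).resolve_right (by exact_mod_cast h')
  intro i
  fin_cases i
  · exact e 0 0 1 (by decide +kernel) (by decide +kernel)
  · exact e 1 0 4 (by decide +kernel) (by decide +kernel)
  · exact e 2 0 5 (by decide +kernel) (by decide +kernel)
  · exact e 3 2 1 (by decide +kernel) (by decide +kernel)
  · exact e 4 5 0 (by decide +kernel) (by decide +kernel)
  · exact e 5 0 0 (by decide +kernel) (by decide +kernel)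

theorem uu_zero_lie (i) : ⁅uu i, gE 0⁆ = 0 := by
  apply rho_inj
  rw [rho_lie_cast (C := 0) (rho_uu i) (show rho (gE 0) = _ from rho_bas 0)]
  · simp
  · revert i; decide +kernel

/-- Row `i`, column `k` entries used to read off the `vv`-coordinates of a bracket. -/
def coord (A : Matrix (Fin 7) (Fin 7) ℤ) : Fin 5 → ℤ :=
  ![A 0 4 / 6, A 0 5 / (-6), A 2 1, A 5 0 / (-6), A 0 0]

theorem uu_lie (i j) : ⁅uu i, uu j⁆ ∈ Submodule.span ℂ (Set.range vv) := by
  have h : uuM i * uuM j - uuM j * uuM i =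
      ∑ k, coord (uuM i * uuM j - uuM j * uuM i) k • vvM k := by
    revert i j; decide +kernel
  have h' : ⁅uu i, uu j⁆ =
      ∑ k, coord (uuM i * uuM j - uuM j * uuM i) k • vv k := by
    apply rho_inj
    rw [rho_lie_cast (rho_uu i) (rho_uu j) h]
    simp only [map_sum, map_zsmul, rho_vv]
  rw [h']
  exact Submodule.sum_mem _ fun k _ => zsmul_mem (Submodule.subset_span (Set.mem_range_self k)) _

theorem cent_eq : (centralizerOf ℂ (gE 0)).toSubmodule = Submodule.span ℂ (Set.range uu) := by
  apply le_antisymm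
  · intro y hy
    have hy : ⁅y, gE 0⁆ = 0 := hy
    rw [← lie_skew, neg_eq_zero] at hy
    have hm : y ∈ Submodule.span ℂ (Set.range bas) := span_top ▸ Submodule.mem_top
    obtain ⟨c, rfl⟩ := (Submodule.mem_span_range_iff_exists_fun ℂ).1 hm
    have key : ∑ i, c i • castM (m_e1 * basM i - basM i * m_e1) = 0 := by
      have h := congrArg rho hy
      simp only [lie_sum, lie_smul, map_sum, map_smul, map_zero] at h
      rw [← h]
      refine Finset.sum_congr rfl fun i _ => ?_
      rw [rho_lie_cast (show rho (gE 0) = _ from rho_bas 0) (rho_bas i) rfl]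
      rfl
    have key' : ∀ a b, ∑ i, c i * (((m_e1 * basM i - basM i * m_e1) a b : ℤ) : ℂ) = 0 := by
      intro a b
      have := congrFun (congrFun key a) b
      simp only [Matrix.sum_apply, Matrix.smul_apply, castM_apply, smul_eq_mul] at this
      exact this
    have e : ∀ (p : Fin 14) (a b : Fin 7),
        (∀ i, i ≠ p → (m_e1 * basM i - basM i * m_e1) a b = 0) →
        (m_e1 * basM p - basM p * m_e1) a b ≠ 0 → c p = 0 := by
      intro p a b h h'
      have k := key' a b
      rw [Finset.sum_eq_single p (fun i _ hi => by rw [h i hi]; simp) (by simp)] at k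
      exact (mul_eq_zero.1 k).resolve_right (by exact_mod_cast h')
    have c1 := e 1 0 2 (by decide +kernel) (by decide +kernel)
    have c2 := e 2 0 3 (by decide +kernel) (by decide +kernel)
    have c3 := e 3 0 4 (by decide +kernel) (by decide +kernel)
    have c8 := e 8 0 0 (by decide +kernel) (by decide +kernel)
    have c10 := e 10 2 1 (by decide +kernel) (by decide +kernel)
    have c11 := e 11 2 0 (by decide +kernel) (by decide +kernel)
    have c12 := e 12 3 0 (by decide +kernel) (by decide +kernel)
    have c7 : c 7 = c 6 * 2 := by
      have h : ∀ i, (m_e1 * basM i - basM i * m_e1) 0 1 =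
          if i = 6 then -2 else if i = 7 then 1 else 0 := by decide +kernel
      have k := key' 0 1
      simp only [h] at k
      rw [Fintype.sum_eq_add (6 : Fin 14) 7 (by decide)
        (fun i hi => by simp [hi.1, hi.2])] at k
      have k' : c 6 * (-2) + c 7 * 1 = 0 := by simpa using k
      linear_combination k'
    have : ∑ i, c i • bas i = c 0 • uu 0 + c 4 • uu 1 + c 5 • uu 2 + c 9 • uu 3 + c 13 • uu 4 +
        c 6 • uu 5 := by
      change _ = c 0 • bas 0 + c 4 • bas 4 + c 5 • bas 5 + c 9 • bas 9 + c 13 • bas 13 +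
        c 6 • (bas 6 + (2 : ℂ) • bas 7)
      have hs : ∑ i, c i • bas i = c 0 • bas 0 + c 1 • bas 1 + c 2 • bas 2 + c 3 • bas 3 +
        c 4 • bas 4 + c 5 • bas 5 + c 6 • bas 6 + c 7 • bas 7 + c 8 • bas 8 + c 9 • bas 9 +
        c 10 • bas 10 + c 11 • bas 11 + c 12 • bas 12 + c 13 • bas 13 := by
        simp only [Fin.sum_univ_castSucc, Finset.univ_eq_empty, Finset.sum_empty, zero_add]
        rfl
      rw [hs, c1, c2, c3, c7, c8, c10, c11, c12]
      module
    rw [this]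
    have hu : ∀ i, uu i ∈ Submodule.span ℂ (Set.range uu) := fun i =>
      Submodule.subset_span ⟨i, rfl⟩
    have hs : ∀ (z : ℂ) i, z • uu i ∈ Submodule.span ℂ (Set.range uu) := fun z i =>
      Submodule.smul_mem _ _ (hu i)
    exact add_mem (add_mem (add_mem (add_mem (add_mem (hs _ _) (hs _ _)) (hs _ _)) (hs _ _))
      (hs _ _)) (hs _ _)
  · rw [Submodule.span_le]
    rintro _ ⟨i, rfl⟩
    exact uu_zero_lie i

theorem derived_eq :
    derivedOf ℂ (centralizerOf ℂ (gE 0)) = Submodule.span ℂ (Set.range vv) := by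
  unfold derivedOf bracketSpan
  apply le_antisymm
  · rw [Submodule.span_le]
    rintro _ ⟨x, hx, y, hy, rfl⟩
    rw [cent_eq] at hx hy
    obtain ⟨a, rfl⟩ := (Submodule.mem_span_range_iff_exists_fun ℂ).1 hx
    obtain ⟨b, rfl⟩ := (Submodule.mem_span_range_iff_exists_fun ℂ).1 hy
    simp only [sum_lie, lie_sum, smul_lie, lie_smul]
    exact Submodule.sum_mem _ fun i _ => Submodule.smul_mem _ _ <|
      Submodule.sum_mem _ fun j _ => Submodule.smul_mem _ _ (uu_lie _ _)
  · rw [Submodule.span_le]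
    rintro _ ⟨k, rfl⟩
    have e : ∀ (i j : Fin 6) (z : ℤ), z ≠ 0 →
        uuM i * uuM j - uuM j * uuM i = z • vvM k →
        vv k ∈ Submodule.span ℂ {z : g₂ ℂ | ∃ x ∈ (centralizerOf ℂ (gE 0)).toSubmodule,
          ∃ y ∈ (centralizerOf ℂ (gE 0)).toSubmodule, z = ⁅x, y⁆} := by
      intro i j z hz h
      have h' : vv k = (z : ℂ)⁻¹ • ⁅uu i, uu j⁆ := by
        have : ⁅uu i, uu j⁆ = (z : ℂ) • vv k := by
          apply rho_inj
          rw [rho_lie_cast (rho_uu i) (rho_uu j) h, Int.cast_smul_eq_zsmul, map_zsmul, map_zsmul,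
            rho_vv]
        rw [this, inv_smul_smul₀ (by exact_mod_cast hz)]
      rw [h']
      exact Submodule.smul_mem _ _
        (Submodule.subset_span ⟨_, uu_zero_lie i, _, uu_zero_lie j, rfl⟩)
    fin_cases k
    · exact e 5 1 1 (by decide) (by decide +kernel)
    · exact e 5 2 2 (by decide) (by decide +kernel)
    · exact e 5 3 (-1) (by decide) (by decide +kernel)
    · exact e 5 4 (-2) (by decide) (by decide +kernel)
    · exact e 2 4 36 (by decide) (by decide +kernel)

theorem gH_ne_zero : gH 0 ≠ 0 := linInd_bas.ne_zero 6

end Model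

/-- In the simple complex Lie algebra of type G₂ there is an `sl₂`-triple `(e,h,f)`
such that `dim g_e = 6`, `dim [g_e, g_e] = 5`, `e ∉ [g_e, g_e]`, and hence `g_e` is
the direct sum of the span of `e` and `[g_e, g_e]`. -/
theorem exists_sl2Triple_g₂ :
    ∃ e h f : LieAlgebra.g₂ ℂ, IsSl2Triple h e f ∧
      Module.finrank ℂ (centralizerOf ℂ e).toSubmodule = 6 ∧
      Module.finrank ℂ (derivedOf ℂ (centralizerOf ℂ e)) = 5 ∧
      e ∉ derivedOf ℂ (centralizerOf ℂ e) ∧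
      (centralizerOf ℂ e).toSubmodule
        = Submodule.span ℂ {e} ⊔ derivedOf ℂ (centralizerOf ℂ e) ∧
      Submodule.span ℂ {e} ⊓ derivedOf ℂ (centralizerOf ℂ e) = ⊥ := by
  have hu := linInd_uu
  have huv := linearIndependent_finCons.1 hu
  refine ⟨gE 0, gH 0, gF 0, ⟨gH_ne_zero, g_EF_eq 0, ?_, ?_⟩, ?_, ?_, ?_, ?_, ?_⟩
  · rw [relE.h1e1, ofNat_smul_eq_nsmul]
  · rw [← neg_eq_iff_eq_neg, ← neg_lie, relF.h1e1, ofNat_smul_eq_nsmul]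
  · rw [cent_eq, finrank_span_eq_card hu, Fintype.card_fin]
  · rw [derived_eq, finrank_span_eq_card huv.1, Fintype.card_fin]
  · rw [derived_eq]
    exact huv.2
  · rw [cent_eq, derived_eq, uu, Fin.range_cons, Submodule.span_insert]
  · rw [derived_eq, ← disjoint_iff]
    exact (Submodule.disjoint_span_singleton_of_notMem huv.2).symm

end PaperStmt
end

section
/- Let g be the simple complex Lie algebra of type F₄. Then there exists an sl₂-triple (e,h,f) in g such that the centralizer g_e has dimension 16, its derived subalgebra [g_e, g_e] has dimension 15, and e ∉ [g_e, g_e]; consequently g_e is the direct sum of the span of e and [g_e, g_e]. -/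
namespace PaperStmt

open LieAlgebra Module

variable (R : Type*) {L : Type*} [CommRing R] [LieRing L] [LieAlgebra R L]

/-! ### Formal integer combinations -/

namespace F4

set_option linter.unusedSectionVars false

section Lists

variable {κ : Type*} {M N : Type*} [AddCommGroup M] [AddCommGroup N]

/-- Evaluation of a formal integer combination. -/
def ev (B : κ → M) (l : List (κ × ℤ)) : M := (l.map fun p => p.2 • B p.1).sum

/-- Scaling of a formal combination. -/
def sca (n : ℤ) (l : List (κ × ℤ)) : List (κ × ℤ) := l.map fun p => (p.1, n * p.2)

/-- Linear substitution in a formal combination. -/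
def act {μ : Type*} (T : κ → List (μ × ℤ)) (l : List (κ × ℤ)) : List (μ × ℤ) :=
  l.flatMap fun p => sca p.2 (T p.1)

/-- Coefficient of a key in a formal combination. -/
def cf [DecidableEq κ] (l : List (κ × ℤ)) (k : κ) : ℤ :=
  l.foldr (fun p a => if p.1 = k then p.2 + a else a) 0

/-- Test whether a formal combination is formally zero. -/
def isZ [DecidableEq κ] (l : List (κ × ℤ)) : Bool := l.all fun p => cf l p.1 == 0

@[simp] lemma ev_nil (B : κ → M) : ev B [] = 0 := rfl

@[simp] lemma ev_cons (B : κ → M) (p : κ × ℤ) (l : List (κ × ℤ)) :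
    ev B (p :: l) = p.2 • B p.1 + ev B l := by simp [ev]

@[simp] lemma ev_append (B : κ → M) (l l' : List (κ × ℤ)) :
    ev B (l ++ l') = ev B l + ev B l' := by simp [ev]

@[simp] lemma ev_sca (B : κ → M) (n : ℤ) (l : List (κ × ℤ)) :
    ev B (sca n l) = n • ev B l := by
  induction l with
  | nil => simp [sca]
  | cons p l ih =>
    have : sca n (p :: l) = (p.1, n * p.2) :: sca n l := rfl
    rw [this, ev_cons, ev_cons, ih, smul_add, mul_smul]

lemma map_ev (f : M →+ N) (B : κ → M) (l : List (κ × ℤ)) :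
    f (ev B l) = ev (fun k => f (B k)) l := by
  induction l with
  | nil => simp
  | cons p l ih => simp [ih]

lemma ev_congr {B B' : κ → M} {l : List (κ × ℤ)} (h : ∀ p ∈ l, B p.1 = B' p.1) :
    ev B l = ev B' l := by
  induction l with
  | nil => simp
  | cons p l ih =>
    rw [ev_cons, ev_cons, h p (by simp), ih fun q hq => h q (by simp [hq])]

lemma ev_act {μ : Type*} (B : μ → M) (T : κ → List (μ × ℤ)) (l : List (κ × ℤ)) :
    ev B (act T l) = ev (fun k => ev B (T k)) l := by
  induction l with
  | nil => rfl
  | cons p l ih =>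
    have : act T (p :: l) = sca p.2 (T p.1) ++ act T l := rfl
    rw [this, ev_append, ih, ev_sca, ev_cons]

variable [DecidableEq κ]

lemma cf_cons (p : κ × ℤ) (l : List (κ × ℤ)) (k : κ) :
    cf (p :: l) k = (if p.1 = k then p.2 else 0) + cf l k := by
  simp only [cf, List.foldr_cons]; split_ifs <;> simp

lemma cf_eq (l : List (κ × ℤ)) (k : κ) :
    cf l k = ev (fun k => (Finsupp.single k 1 : κ →₀ ℤ)) l k := by
  induction l with
  | nil => simp [cf]
  | cons p l ih =>
    rw [cf_cons, ih, ev_cons, Finsupp.add_apply, Finsupp.smul_apply, Finsupp.single_apply]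
    split_ifs <;> simp

lemma ev_eq_sum_cf (B : κ → M) (l : List (κ × ℤ)) :
    ev B l = Finsupp.linearCombination ℤ B (ev (fun k => (Finsupp.single k 1 : κ →₀ ℤ)) l) := by
  induction l with
  | nil => simp
  | cons p l ih => rw [ev_cons, ih, ev_cons]; simp

lemma cf_notMem {l : List (κ × ℤ)} {k : κ} (h : ∀ p ∈ l, p.1 ≠ k) : cf l k = 0 := by
  induction l with
  | nil => rfl
  | cons p l ih =>
    rw [cf_cons, if_neg (h p (by simp)), ih fun q hq => h q (by simp [hq]), zero_add]

lemma ev_eq_zero (B : κ → M) {l : List (κ × ℤ)} (h : isZ l = true) : ev B l = 0 := by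
  rw [ev_eq_sum_cf]
  have : ev (fun k => (Finsupp.single k 1 : κ →₀ ℤ)) l = 0 := by
    ext k
    rw [← cf_eq, Finsupp.coe_zero, Pi.zero_apply]
    by_cases hk : ∃ p ∈ l, p.1 = k
    · obtain ⟨p, hp, rfl⟩ := hk
      simpa using (List.all_eq_true.1 h) p hp
    · push Not at hk
      exact cf_notMem hk
  rw [this, map_zero]

lemma ev_eq_of_isZ (B : κ → M) {l l' : List (κ × ℤ)} (h : isZ (l ++ sca (-1) l') = true) :
    ev B l = ev B l' := by
  have := ev_eq_zero B h
  rw [ev_append, ev_sca, neg_one_smul, add_neg_eq_zero] at this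
  exact this

end Lists

/-! ### Finite matrices as endomorphisms of `ℕ →₀ ℂ` -/

section Mats

/-- Formal integer combinations of matrix units. -/
abbrev SM := List ((ℕ × ℕ) × ℤ)

/-- Matrix units. -/
noncomputable def U (p : ℕ × ℕ) : Module.End ℂ (ℕ →₀ ℂ) :=
  Finsupp.lsingle p.1 ∘ₗ Finsupp.lapply p.2

/-- Product of formal matrices. -/
def mu (a b : SM) : SM :=
  act (fun p => act (fun q => if p.2 = q.1 then [((p.1, q.2), 1)] else []) b) a

/-- Commutator of formal matrices. -/
def com (a b : SM) : SM := mu a b ++ sca (-1) (mu b a)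

lemma U_mul (p q : ℕ × ℕ) : U p * U q = if p.2 = q.1 then U (p.1, q.2) else 0 := by
  refine LinearMap.ext fun v => ?_
  simp only [U, Module.End.mul_apply, LinearMap.comp_apply, Finsupp.lsingle_apply,
    Finsupp.lapply_apply, Finsupp.single_apply]
  split_ifs with h1 h2 h2
  · simp
  · exact absurd h1.symm h2
  · exact absurd h2.symm h1
  · simp

lemma ev_mu (a b : SM) : ev U (mu a b) = ev U a * ev U b := by
  rw [mu, ev_act]
  have h1 : ∀ p : ℕ × ℕ, ev U (act (fun q => if p.2 = q.1 then [((p.1, q.2), (1 : ℤ))] else []) b)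
      = U p * ev U b := by
    intro p
    rw [ev_act]
    refine Eq.trans ?_ (map_ev (AddMonoidHom.mulLeft (U p)) U b).symm
    congr 1; funext q
    rw [AddMonoidHom.coe_mulLeft, U_mul]
    split_ifs <;> simp
  simp only [h1]
  exact (map_ev (AddMonoidHom.mulRight (ev U b)) U a).symm

lemma ev_com (a b : SM) : ev U (com a b) = ⁅ev U a, ev U b⁆ := by
  rw [com, ev_append, ev_sca, ev_mu, ev_mu, Ring.lie_def, neg_one_smul, sub_eq_add_neg]

/-- Matrix entries as linear functionals. -/
noncomputable def ent (p : ℕ × ℕ) : Module.End ℂ (ℕ →₀ ℂ) →ₗ[ℂ] ℂ :=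
  Finsupp.lapply p.1 ∘ₗ LinearMap.applyₗ (Finsupp.single p.2 (1 : ℂ))

lemma ent_U (p q : ℕ × ℕ) : ent p (U q) = if q = p then 1 else 0 := by
  simp only [ent, U, LinearMap.comp_apply, LinearMap.applyₗ_apply_apply, Finsupp.lapply_apply,
    Finsupp.lsingle_apply, Finsupp.single_apply, Prod.ext_iff]
  by_cases h1 : q.1 = p.1 <;> by_cases h2 : q.2 = p.2 <;> simp [h1, h2, eq_comm (a := p.2)]

lemma ent_ev (p : ℕ × ℕ) (l : SM) : ent p (ev U l) = (cf l p : ℂ) := by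
  induction l with
  | nil => simp [cf]
  | cons q l ih =>
    rw [ev_cons, cf_cons, map_add, ih, map_zsmul, ent_U]
    split_ifs <;> simp

/-- Pairing of a formal functional with a formal matrix. -/
def pair (φ l : SM) : ℤ := φ.foldr (fun p a => p.2 * cf l p.1 + a) 0

/-- The linear functional of a formal functional. -/
noncomputable def fn (φ : SM) : Module.End ℂ (ℕ →₀ ℂ) →ₗ[ℂ] ℂ := ev ent φ

lemma fn_ev (φ l : SM) : fn φ (ev U l) = (pair φ l : ℂ) := by
  induction φ with
  | nil => simp [fn, pair]
  | cons q φ ih =>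
    have h1 : fn (q :: φ) = q.2 • ent q.1 + fn φ := ev_cons _ _ _
    have h2 : pair (q :: φ) l = q.2 * cf l q.1 + pair φ l := rfl
    rw [h1, h2, LinearMap.add_apply, ih, LinearMap.smul_apply, ent_ev]
    simp

end Mats
/-- Parents `(i, p)`: the `k`-th positive root vector is `⁅E i, X p⁆`. -/
def tabPar : List (Fin 4 × ℕ) := [
  (0, 0),
  (0, 0),
  (0, 0),
  (0, 0),
  (0, 1),
  (1, 2),
  (2, 3),
  (0, 5),
  (1, 5),
  (1, 6),
  (1, 7),
  (0, 9),
  (1, 9),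
  (0, 10),
  (1, 11),
  (2, 12),
  (0, 14),
  (2, 14),
  (0, 17),
  (1, 17),
  (0, 19),
  (1, 20),
  (2, 21),
  (3, 22)]

/-- Heights of the positive roots. -/
def tabHt : List ℕ := [
  1, 1, 1, 1, 2, 2, 2, 3, 3, 3, 4, 4, 4, 5, 5, 5, 6, 6, 7, 7, 8, 9, 10, 11]

/-- Values of the simple coroots on the positive roots. -/
def tabH : List (List ℤ) := [
  [2, -1, 0, 0, 1, -1, 0, 1, -2, -1, 0, 1, -2, 2, 0, -2, 2, 0, 2, -1, 1, 0, 0, 0],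
  [-1, 2, -2, 0, 1, 0, -2, -1, 2, 0, 1, -1, 2, 0, 1, 0, 0, -1, -2, 1, 0, 2, 0, 0],
  [0, -1, 2, -1, -1, 1, 1, 1, 0, 0, 0, 0, -1, 0, -1, 1, -1, 1, 1, 0, 0, -1, 1, 0],
  [0, 0, -1, 2, 0, -1, 1, -1, -1, 1, -1, 1, 1, -1, 1, 0, 1, 0, 0, 0, 0, 0, -1, 1]]

/-- A simple root pairing positively with the sum of root number `k` and simple root `j`. -/
def tabQ : List (List (Fin 4)) := [
  [0, 0, 0, 0, 0, 0, 0, 0, 1, 0, 0, 0, 1, 0, 0, 2, 0, 0, 0, 0, 0, 0, 0, 0],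
  [0, 1, 2, 1, 1, 1, 3, 1, 1, 1, 1, 1, 1, 1, 1, 1, 1, 1, 0, 1, 1, 1, 1, 1],
  [0, 2, 2, 2, 0, 2, 2, 2, 2, 2, 2, 2, 2, 0, 2, 2, 0, 2, 2, 2, 2, 2, 2, 2],
  [0, 1, 2, 3, 3, 3, 3, 0, 1, 3, 1, 3, 3, 0, 3, 3, 3, 3, 0, 3, 3, 1, 3, 3]]

/-- Action of `E j` on positive root vectors (0-23) and on the `H i` (24-27). -/
def tabE : List (List (List (ℕ × ℤ))) := [
  [[], [(4, 1)], [], [], [], [(7, 1)], [], [], [(10, 2)], [(11, 1)], [(13, 1)], [], [(14, 2)], [], [(16, 1)], [(17, 2)], [], [(18, 1)], [], [(20, 1)], [], [], [], [], [(0, -2)], [(0, 1)], [], []],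
  [[(4, -1)], [], [(5, 1)], [], [], [(8, 1)], [(9, 1)], [(10, 1)], [], [(12, 1)], [], [(14, 1)], [], [], [], [], [], [(19, 1)], [(20, 2)], [], [(21, 1)], [], [], [], [(1, 1)], [(1, -2)], [(1, 1)], []],
  [[], [(5, -1)], [], [(6, 1)], [(7, -1)], [], [], [], [], [], [], [], [(15, 1)], [], [(17, 1)], [], [(18, 1)], [], [], [], [], [(22, 1)], [], [], [], [(2, 2)], [(2, -2)], [(2, 1)]],
  [[], [], [(6, -1)], [], [], [(9, -1)], [], [(11, -1)], [(12, -1)], [], [(14, -1)], [], [], [(16, -1)], [], [], [], [], [], [], [], [], [(23, 1)], [], [], [], [(3, 1)], [(3, -2)]]]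

/-- Action of `F j` on positive root vectors. -/
def tabF : List (List (List (ℕ × ℤ))) := [
  [[(24, -1)], [], [], [], [(1, 1)], [], [], [(5, 1)], [], [], [(8, 1)], [(9, 1)], [], [(10, 2)], [(12, 1)], [], [(14, 2)], [(15, 1)], [(17, 2)], [], [(19, 1)], [], [], []],
  [[], [(25, -1)], [], [], [(0, -1)], [(2, 2)], [], [], [(5, 2)], [(6, 2)], [(7, 1)], [], [(9, 2)], [], [(11, 1)], [], [], [], [], [(17, 1)], [(18, 1)], [(20, 2)], [], []],
  [[], [], [(26, -1)], [], [], [(1, -1)], [(3, 1)], [(4, -1)], [], [], [], [], [], [], [], [(12, 1)], [], [(14, 1)], [(16, 1)], [], [], [], [(21, 1)], []],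
  [[], [], [], [(27, -1)], [], [], [(2, -1)], [], [], [(5, -1)], [], [(7, -1)], [(8, -1)], [], [(10, -1)], [], [(13, -1)], [], [], [], [], [], [], [(22, 1)]]]

/-! ### Consequences of the Serre relations -/

section Serre

variable {𝔤 : Type*} [LieRing 𝔤] [LieAlgebra ℂ 𝔤]

/-- The relations between the generators that we use. -/
structure SerreData (E F H : Fin 4 → 𝔤) : Prop where
  hh : ∀ i j, ⁅H i, H j⁆ = 0
  ef : ∀ i, ⁅E i, F i⁆ = H i
  ef_ne : ∀ i j, i ≠ j → ⁅E i, F j⁆ = 0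
  he : ∀ i j, ⁅H i, E j⁆ = CartanMatrix.F₄ i j • E j
  hf : ∀ i j, ⁅H i, F j⁆ = -(CartanMatrix.F₄ i j • F j)
  nilE : ∀ i z, ∃ n : ℕ, ((LieAlgebra.ad ℂ 𝔤 (E i)) ^ n) z = 0
  nilF : ∀ i z, ∃ n : ℕ, ((LieAlgebra.ad ℂ 𝔤 (F i)) ^ n) z = 0

lemma SerreData.symm {E F H : Fin 4 → 𝔤} (S : SerreData E F H) :
    SerreData F E (fun i => -H i) where
  hh i j := by simp [S.hh]
  ef i := by rw [← lie_skew, S.ef]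
  ef_ne i j h := by rw [← lie_skew, S.ef_ne j i h.symm, neg_zero]
  he i j := by rw [neg_lie, S.hf, neg_neg]
  hf i j := by rw [neg_lie, S.he]
  nilE := S.nilF
  nilF := S.nilE

lemma SerreData.fe {E F H : Fin 4 → 𝔤} (S : SerreData E F H) (q i : Fin 4) :
    ⁅F q, E i⁆ = if q = i then -H i else 0 := by
  rw [← lie_skew]
  split_ifs with h
  · rw [h, S.ef]
  · rw [S.ef_ne i q (Ne.symm h), neg_zero]

/-- A lowest weight vector of positive weight vanishes. -/
lemma eq_zero_of_lowest {e f h z : 𝔤} {m : ℤ} (hm : 0 < m) (hef : ⁅e, f⁆ = h)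
    (hhe : ⁅h, e⁆ = (2 : ℤ) • e) (hhz : ⁅h, z⁆ = m • z) (hfz : ⁅f, z⁆ = 0)
    (hn : ∃ n : ℕ, ((LieAlgebra.ad ℂ 𝔤 e) ^ n) z = 0) : z = 0 := by
  have hw : ∀ n : ℕ, ⁅h, ((LieAlgebra.ad ℂ 𝔤 e) ^ n) z⁆
      = (m + 2 * n : ℤ) • ((LieAlgebra.ad ℂ 𝔤 e) ^ n) z := by
    intro n
    induction n with
    | zero => simp [hhz]
    | succ n ih =>
      rw [pow_succ', Module.End.mul_apply, LieAlgebra.ad_apply, leibniz_lie, ih, hhe, lie_zsmul,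
        zsmul_lie, ← add_smul]
      congr 1; push_cast; ring
  have hl : ∀ n : ℕ, ⁅f, ((LieAlgebra.ad ℂ 𝔤 e) ^ (n + 1)) z⁆
      = (-((n + 1) * (m + n)) : ℤ) • ((LieAlgebra.ad ℂ 𝔤 e) ^ n) z := by
    intro n
    have hfe : ⁅f, e⁆ = -h := by rw [← lie_skew, hef]
    induction n with
    | zero =>
      simp only [zero_add, pow_one, LieAlgebra.ad_apply]
      rw [leibniz_lie, hfe, hfz, neg_lie, hhz]; simp
    | succ n ih =>
      rw [pow_succ', Module.End.mul_apply, LieAlgebra.ad_apply, leibniz_lie, ih, hfe, neg_lie, hw,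
        lie_zsmul, ← neg_smul, ← LieAlgebra.ad_apply ℂ 𝔤 e, ← Module.End.mul_apply, ← pow_succ',
        ← add_smul]
      congr 1; push_cast; ring
  obtain ⟨n, hn⟩ := hn
  induction n with
  | zero => simpa using hn
  | succ n ih =>
    apply ih
    have := hl n
    rw [hn, lie_zero, eq_comm, ← Int.cast_smul_eq_zsmul ℂ, smul_eq_zero, Int.cast_eq_zero] at this
    rcases this with h0 | h0
    · exfalso
      have : (0 : ℤ) < (n + 1) * (m + n) := by positivity
      omega
    · exact h0

/-- Table lookup. -/
def par (k : ℕ) : Fin 4 × ℕ := tabPar.getD k (0, 0)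
/-- Table lookup. -/
def ht (k : ℕ) : ℕ := tabHt.getD k 0
/-- Table lookup. -/
def hw (q : Fin 4) (k : ℕ) : ℤ := (tabH.getD q []).getD k 0
/-- Table lookup. -/
def tQ (q : Fin 4) (k : ℕ) : Fin 4 := (tabQ.getD q []).getD k 0
/-- Table lookup. -/
def tE (q : Fin 4) (k : ℕ) : List (ℕ × ℤ) := (tabE.getD q []).getD k []
/-- Table lookup. -/
def tF (q : Fin 4) (k : ℕ) : List (ℕ × ℤ) := (tabF.getD q []).getD k []

/-- The positive root vectors. -/
def X (E : Fin 4 → 𝔤) (k : ℕ) : 𝔤 :=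
  if _h : 4 ≤ k ∧ (par k).2 < k then ⁅E (par k).1, X E (par k).2⁆ else E (Fin.ofNat 4 k)
termination_by k

/-- Root vectors and Cartan elements. -/
def BX (E H : Fin 4 → 𝔤) (k : ℕ) : 𝔤 := if k < 24 then X E k else H (Fin.ofNat 4 k)

lemma ck_par : ∀ k < 24, 4 ≤ k → (par k).2 < k ∧ ht (par k).2 + 1 = ht k := by decide +kernel

lemma X_low (E : Fin 4 → 𝔤) (i : Fin 4) : X E i = E i := by
  rw [X, dif_neg (by omega)]
  congr 1
  fin_cases i <;> rfl

lemma X_step (E : Fin 4 → 𝔤) {k : ℕ} (h1 : k < 24) (h2 : 4 ≤ k) :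
    X E k = ⁅E (par k).1, X E (par k).2⁆ := by
  rw [X, dif_pos ⟨h2, (ck_par k h1 h2).1⟩]

lemma ck_hw0 : ∀ q i : Fin 4, hw q i = CartanMatrix.F₄ q i := by
  intro q i; fin_cases q <;> fin_cases i <;> rfl
lemma ck_hw : ∀ q : Fin 4, ∀ k < 24, 4 ≤ k →
    hw q k = CartanMatrix.F₄ q (par k).1 + hw q (par k).2 := by decide +kernel

lemma lie_H_X {E F H : Fin 4 → 𝔤} (S : SerreData E F H) (q : Fin 4) :
    ∀ k < 24, ⁅H q, X E k⁆ = hw q k • X E k := by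
  intro k
  induction k using Nat.strong_induction_on with
  | _ k ih =>
    intro hk
    by_cases h4 : 4 ≤ k
    · have hp := (ck_par k hk h4).1
      rw [X_step E hk h4, leibniz_lie, ih _ hp (by omega), S.he, ck_hw q k hk h4, add_smul,
        lie_zsmul, zsmul_lie]
    · obtain ⟨i, rfl⟩ : ∃ i : Fin 4, k = i := ⟨⟨k, by omega⟩, rfl⟩
      rw [X_low, S.he, ck_hw0]

lemma ck_EH : ∀ j : Fin 4, ∀ k < 28, 24 ≤ k →
    tE j k = [] ∧ CartanMatrix.F₄ (Fin.ofNat 4 k) j = 0 ∨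
      tE j k = [((j : ℕ), -CartanMatrix.F₄ (Fin.ofNat 4 k) j)] := by decide +kernel

lemma lie_E_H {E F H : Fin 4 → 𝔤} (S : SerreData E F H) (j : Fin 4) {k : ℕ} (h1 : k < 28)
    (h2 : 24 ≤ k) : ⁅E j, BX E H k⁆ = ev (BX E H) (tE j k) := by
  have h3 : ⁅E j, BX E H k⁆ = -(CartanMatrix.F₄ (Fin.ofNat 4 k) j • E j) := by
    rw [BX, if_neg (by omega), ← lie_skew, S.he]
  rcases ck_EH j k h1 h2 with ⟨h, h0⟩ | h
  · rw [h3, h, h0]; simp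
  · rw [h3, h]
    simp only [ev_cons, ev_nil, add_zero]
    rw [BX, if_pos (by omega), X_low, neg_smul]

lemma ck_F0 : ∀ q i : Fin 4, tF q i = if q = i then [(24 + (i : ℕ), -1)] else [] := by
  decide +kernel

lemma ck_F : ∀ q : Fin 4, ∀ k < 24, 4 ≤ k →
    isZ (tF q k ++ sca (-1) ((if q = (par k).1 then [((par k).2, -hw (par k).1 (par k).2)] else [])
      ++ act (tE (par k).1) (tF q (par k).2))) = true := by decide +kernel

lemma ck_Fht : ∀ q : Fin 4, ∀ k < 24, ∀ p ∈ tF q k,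
    (24 ≤ p.1 ∧ p.1 < 28) ∨ (p.1 < 24 ∧ ht p.1 + 1 = ht k) := by decide +kernel

lemma ck_Eht : ∀ j : Fin 4, ∀ k < 24, ∀ p ∈ tE j k,
    p.1 < 24 ∧ ht p.1 = ht k + 1 ∧
      hw (tQ j k) p.1 = CartanMatrix.F₄ (tQ j k) j + hw (tQ j k) k := by decide +kernel

lemma ck_pos : ∀ j : Fin 4, ∀ k < 24, 0 < CartanMatrix.F₄ (tQ j k) j + hw (tQ j k) k := by
  decide +kernel

lemma ck_E : ∀ j : Fin 4, ∀ k < 24,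
    isZ (((if tQ j k = j then [(k, -hw j k)] else []) ++ act (tE j) (tF (tQ j k) k))
      ++ sca (-1) (act (tF (tQ j k)) (tE j k))) = true := by decide +kernel

lemma ck_ht : ∀ k < 24, 1 ≤ ht k ∧ ht k ≤ 11 ∧ (ht k ≤ 1 → k < 4) := by decide +kernel

lemma lie_ev (x : 𝔤) (B : ℕ → 𝔤) (T : ℕ → List (ℕ × ℤ)) (l : List (ℕ × ℤ))
    (h : ∀ p ∈ l, ⁅x, B p.1⁆ = ev B (T p.1)) : ⁅x, ev B l⁆ = ev B (act T l) := by
  have := map_ev (LieAlgebra.ad ℂ 𝔤 x).toAddMonoidHom B l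
  simp only [LinearMap.toAddMonoidHom_coe, LieAlgebra.ad_apply] at this
  rw [this, ev_act]
  exact ev_congr h

lemma tables_aux {E F H : Fin 4 → 𝔤} (S : SerreData E F H) (n : ℕ) :
    (∀ k < 24, ht k ≤ n + 1 → ∀ q, ⁅F q, X E k⁆ = ev (BX E H) (tF q k)) ∧
    (∀ k < 24, ht k ≤ n → ∀ j, ⁅E j, X E k⁆ = ev (BX E H) (tE j k)) := by
  have hB : ∀ k < 24, BX E H k = X E k := fun k hk => by rw [BX, if_pos hk]
  induction n with
  | zero =>
    constructor
    · intro k hk h1 q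
      obtain ⟨i, rfl⟩ : ∃ i : Fin 4, k = i := ⟨⟨k, (ck_ht k hk).2.2 h1⟩, rfl⟩
      rw [X_low, S.fe, ck_F0]
      split_ifs with h
      · have : Fin.ofNat 4 (24 + (i : ℕ)) = i := by fin_cases i <;> rfl
        rw [ev_cons, ev_nil, BX, if_neg (by simp), this]
        simp
      · simp
    · intro k hk h0
      have := (ck_ht k hk).1
      omega
  | succ n ih =>
    obtain ⟨ihF, ihE⟩ := ih
    have nF : ∀ k < 24, ht k ≤ n + 1 + 1 → ∀ q, ⁅F q, X E k⁆ = ev (BX E H) (tF q k) := by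
      intro k hk hh q
      by_cases h1 : ht k ≤ n + 1
      · exact ihF k hk h1 q
      have h4 : 4 ≤ k := by
        by_contra h4
        have h5 : ∀ k < 4, ht k = 1 := by decide
        have := h5 k (by omega)
        omega
      obtain ⟨hp, hph⟩ := ck_par k hk h4
      have e1 : ⁅E (par k).1, ev (BX E H) (tF q (par k).2)⁆
          = ev (BX E H) (act (tE (par k).1) (tF q (par k).2)) := by
        refine lie_ev _ _ _ _ fun p hp' => ?_
        rcases ck_Fht q (par k).2 (by omega) p hp' with ⟨h, h'⟩ | ⟨h, h'⟩
        · exact lie_E_H S _ h' h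
        · rw [hB _ h]
          exact ihE _ h (by omega) _
      rw [X_step E hk h4, leibniz_lie, ihF (par k).2 (by omega) (by omega) q, e1, S.fe,
        ev_eq_of_isZ (BX E H) (ck_F q k hk h4), ev_append]
      congr 1
      split_ifs with h
      · rw [neg_lie, lie_H_X S _ _ (by omega)]
        simp [hB (par k).2 (by omega)]
      · simp
    refine ⟨nF, fun k hk hh j => ?_⟩
    by_cases h1 : ht k ≤ n
    · exact ihE k hk h1 j
    rw [← sub_eq_zero]
    set q := tQ j k with hq
    refine eq_zero_of_lowest (e := E q) (f := F q) (h := H q) (ck_pos j k hk) (S.ef q) ?_ ?_ ?_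
      (S.nilE q _)
    · rw [S.he, CartanMatrix.F₄_diag]
    · have e2 : ⁅H q, ev (BX E H) (tE j k)⁆
          = (CartanMatrix.F₄ q j + hw q k) • ev (BX E H) (tE j k) := by
        have := map_ev (LieAlgebra.ad ℂ 𝔤 (H q)).toAddMonoidHom (BX E H) (tE j k)
        simp only [LinearMap.toAddMonoidHom_coe, LieAlgebra.ad_apply] at this
        rw [this, ← ev_sca]
        have e3 : ∀ p ∈ tE j k, ⁅H q, BX E H p.1⁆
            = (CartanMatrix.F₄ q j + hw q k) • BX E H p.1 := by
          intro p hp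
          obtain ⟨a, b, c⟩ := ck_Eht j k hk p hp
          rw [hB _ a, lie_H_X S q _ a, c]
        rw [ev_congr (B' := fun i => (CartanMatrix.F₄ q j + hw q k) • BX E H i) e3, ev_sca]
        exact (map_ev (zsmulAddGroupHom _ : 𝔤 →+ 𝔤) (BX E H) (tE j k)).symm
      rw [lie_sub, e2, leibniz_lie, S.he, lie_H_X S q k hk, lie_zsmul, zsmul_lie, ← add_smul,
        smul_sub]
    · have e1 : ⁅E j, ev (BX E H) (tF q k)⁆ = ev (BX E H) (act (tE j) (tF q k)) := by
        refine lie_ev _ _ _ _ fun p hp' => ?_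
        rcases ck_Fht q k hk p hp' with ⟨h, h'⟩ | ⟨h, h'⟩
        · exact lie_E_H S _ h' h
        · rw [hB _ h]
          exact ihE _ h (by omega) _
      have e2 : ⁅F q, ev (BX E H) (tE j k)⁆ = ev (BX E H) (act (tF q) (tE j k)) := by
        refine lie_ev _ _ _ _ fun p hp' => ?_
        obtain ⟨a, b, -⟩ := ck_Eht j k hk p hp'
        rw [hB _ a]
        exact nF _ a (by omega) q
      rw [lie_sub, leibniz_lie, nF k hk (by omega) q, e1, e2, S.fe,
        ← ev_eq_of_isZ (BX E H) (ck_E j k hk), ev_append, sub_eq_zero]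
      congr 1
      split_ifs with h
      · rw [neg_lie, lie_H_X S _ _ hk]
        simp [hB k hk]
      · simp

lemma lie_F_X {E F H : Fin 4 → 𝔤} (S : SerreData E F H) (q : Fin 4) {k : ℕ} (hk : k < 24) :
    ⁅F q, X E k⁆ = ev (BX E H) (tF q k) :=
  (tables_aux S 11).1 k hk (by have := (ck_ht k hk).2.1; omega) q

lemma lie_E_X {E F H : Fin 4 → 𝔤} (S : SerreData E F H) (q : Fin 4) {k : ℕ} (hk : k < 24) :
    ⁅E q, X E k⁆ = ev (BX E H) (tE q k) :=
  (tables_aux S 11).2 k hk (ck_ht k hk).2.1 q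

end Serre
/-! ### Generators of `f₄` -/

section Gens

open CartanMatrix

/-- The quotient map from the free Lie algebra. -/
noncomputable def π : FreeLieAlgebra ℂ (Generators (Fin 4)) →ₗ⁅ℂ⁆ LieAlgebra.f₄ ℂ where
  toFun := fun x => (LieSubmodule.Quotient.mk x :
      FreeLieAlgebra ℂ (Generators (Fin 4)) ⧸ Relations.toIdeal ℂ F₄)
  map_add' := fun _ _ => rfl
  map_smul' := fun _ _ => rfl
  map_lie' := fun {x y} => LieSubmodule.Quotient.mk_bracket (Relations.toIdeal ℂ F₄) x y

lemma π_surj : Function.Surjective π :=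
  LieSubmodule.Quotient.surjective_mk' (Relations.toIdeal ℂ F₄)

lemma π_eq_zero {x : FreeLieAlgebra ℂ (Generators (Fin 4))} :
    π x = 0 ↔ x ∈ Relations.toIdeal ℂ F₄ :=
  LieSubmodule.Quotient.mk_eq_zero' (N := Relations.toIdeal ℂ F₄)

lemma π_rel {x : FreeLieAlgebra ℂ (Generators (Fin 4))} (h : x ∈ Relations.toSet ℂ F₄) :
    π x = 0 := π_eq_zero.2 (LieSubmodule.subset_lieSpan h)

/-- Chevalley generator. -/
noncomputable def gE (i : Fin 4) : LieAlgebra.f₄ ℂ := π (FreeLieAlgebra.of ℂ (Generators.E i))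
/-- Chevalley generator. -/
noncomputable def gF (i : Fin 4) : LieAlgebra.f₄ ℂ := π (FreeLieAlgebra.of ℂ (Generators.F i))
/-- Chevalley generator. -/
noncomputable def gH (i : Fin 4) : LieAlgebra.f₄ ℂ := π (FreeLieAlgebra.of ℂ (Generators.H i))

lemma π_ad (x y : FreeLieAlgebra ℂ (Generators (Fin 4))) (n : ℕ) :
    π ((LieAlgebra.ad ℂ _ x ^ n) y) = (LieAlgebra.ad ℂ _ (π x) ^ n) (π y) := by
  induction n with
  | zero => rfl
  | succ n ih =>
    rw [pow_succ', pow_succ', Module.End.mul_apply, Module.End.mul_apply, LieAlgebra.ad_apply,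
      LieAlgebra.ad_apply, LieHom.map_lie, ih]

lemma g_hh (i j : Fin 4) : ⁅gH i, gH j⁆ = 0 := by
  have := π_rel (x := Relations.HH ℂ (i, j)) (by simp [Relations.toSet])
  simpa [Relations.HH, LieHom.map_lie, gE, gF, gH] using this

lemma g_ef (i : Fin 4) : ⁅gE i, gF i⁆ = gH i := by
  have := π_rel (x := Relations.EF ℂ (i, i)) (by simp [Relations.toSet])
  simpa [Relations.EF, LieHom.map_lie, sub_eq_zero, gE, gF, gH] using this

lemma g_ef_ne (i j : Fin 4) (h : i ≠ j) : ⁅gE i, gF j⁆ = 0 := by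
  have := π_rel (x := Relations.EF ℂ (i, j)) (by simp [Relations.toSet])
  simpa [Relations.EF, LieHom.map_lie, h, gE, gF, gH] using this

lemma g_he (i j : Fin 4) : ⁅gH i, gE j⁆ = F₄ i j • gE j := by
  have := π_rel (x := Relations.HE ℂ F₄ (i, j)) (by simp [Relations.toSet])
  rw [Relations.HE] at this
  simpa only [Function.uncurry_apply_pair, Function.comp_apply, map_sub, LieHom.map_lie, map_zsmul,
    sub_eq_zero, gE, gF, gH] using this

lemma g_hf (i j : Fin 4) : ⁅gH i, gF j⁆ = -(F₄ i j • gF j) := by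
  have := π_rel (x := Relations.HF ℂ F₄ (i, j)) (by simp [Relations.toSet])
  rw [Relations.HF] at this
  simpa only [Function.uncurry_apply_pair, Function.comp_apply, map_add, LieHom.map_lie, map_zsmul,
    add_eq_zero_iff_eq_neg, gE, gF, gH] using this

lemma g_adE (i j : Fin 4) : ((LieAlgebra.ad ℂ _ (gE i)) ^ ((-F₄ i j).toNat + 1)) (gE j) = 0 := by
  have := π_rel (x := Relations.adE ℂ F₄ (i, j)) (by simp [Relations.toSet])
  rw [Relations.adE] at this
  simp only [Function.uncurry_apply_pair, Function.comp_apply] at this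
  rw [π_ad, LieHom.map_lie] at this
  rw [pow_succ, Module.End.mul_apply]
  exact this

lemma g_adF (i j : Fin 4) : ((LieAlgebra.ad ℂ _ (gF i)) ^ ((-F₄ i j).toNat + 1)) (gF j) = 0 := by
  have := π_rel (x := Relations.adF ℂ F₄ (i, j)) (by simp [Relations.toSet])
  rw [Relations.adF] at this
  simp only [Function.uncurry_apply_pair, Function.comp_apply] at this
  rw [π_ad, LieHom.map_lie] at this
  rw [pow_succ, Module.End.mul_apply]
  exact this

/-- A Lie subalgebra containing the generators is everything. -/
lemma mem_of_gens (K : LieSubalgebra ℂ (LieAlgebra.f₄ ℂ)) (hE : ∀ i, gE i ∈ K)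
    (hF : ∀ i, gF i ∈ K) (x : LieAlgebra.f₄ ℂ) : x ∈ K := by
  have hH : ∀ i, gH i ∈ K := fun i => by
    rw [← g_ef]; exact K.lie_mem (hE i) (hF i)
  have hg : ∀ g, π (FreeLieAlgebra.of ℂ g) ∈ K := by
    rintro (i | i | i)
    exacts [hH i, hE i, hF i]
  let φ : FreeLieAlgebra ℂ (Generators (Fin 4)) →ₗ⁅ℂ⁆ K :=
    FreeLieAlgebra.lift ℂ fun g => ⟨π (FreeLieAlgebra.of ℂ g), hg g⟩
  have : K.incl.comp φ = π := by
    apply FreeLieAlgebra.hom_ext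
    intro g
    simp [φ, FreeLieAlgebra.lift_of_apply]
  obtain ⟨y, rfl⟩ := π_surj x
  rw [← this]
  exact (φ y).2

lemma g_nilE (i : Fin 4) (z : LieAlgebra.f₄ ℂ) :
    ∃ n : ℕ, ((LieAlgebra.ad ℂ _ (gE i)) ^ n) z = 0 := by
  refine (LieSubalgebra.mem_engel_iff ℂ (gE i) z).1 (mem_of_gens _ (fun j => ?_) (fun j => ?_) z)
  · exact (LieSubalgebra.mem_engel_iff ..).2 ⟨_, g_adE i j⟩
  · refine (LieSubalgebra.mem_engel_iff ..).2 ⟨3, ?_⟩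
    simp only [pow_succ', pow_zero, Module.End.mul_apply, Module.End.one_apply, LieAlgebra.ad_apply]
    by_cases h : i = j
    · subst h
      rw [g_ef, ← lie_skew (gE i) (gH i), g_he]
      simp
    · rw [g_ef_ne i j h]; simp

lemma g_nilF (i : Fin 4) (z : LieAlgebra.f₄ ℂ) :
    ∃ n : ℕ, ((LieAlgebra.ad ℂ _ (gF i)) ^ n) z = 0 := by
  refine (LieSubalgebra.mem_engel_iff ℂ (gF i) z).1 (mem_of_gens _ (fun j => ?_) (fun j => ?_) z)
  · refine (LieSubalgebra.mem_engel_iff ..).2 ⟨3, ?_⟩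
    simp only [pow_succ', pow_zero, Module.End.mul_apply, Module.End.one_apply, LieAlgebra.ad_apply]
    rw [← lie_skew (gF i) (gE j)]
    by_cases h : i = j
    · subst h
      rw [g_ef, lie_neg, ← lie_skew (gF i) (gH i), g_hf]
      simp
    · rw [g_ef_ne j i (Ne.symm h)]; simp
  · exact (LieSubalgebra.mem_engel_iff ..).2 ⟨_, g_adF i j⟩

lemma gS : SerreData gE gF gH where
  hh := g_hh
  ef := g_ef
  ef_ne := g_ef_ne
  he := g_he
  hf := g_hf
  nilE := g_nilE
  nilF := g_nilF

/-! ### A spanning family of 52 elements -/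

/-- The 52 basis elements: positive root vectors, Cartan elements, negative root vectors. -/
noncomputable def b (k : ℕ) : LieAlgebra.f₄ ℂ := if k < 28 then BX gE gH k else X gF (k - 28)

/-- The span of the 52 elements. -/
noncomputable def Sp : Submodule ℂ (LieAlgebra.f₄ ℂ) :=
  Submodule.span ℂ (Set.range fun k : Fin 52 => b k)

lemma b_mem {k : ℕ} (h : k < 52) : b k ∈ Sp := Submodule.subset_span ⟨⟨k, h⟩, rfl⟩

lemma b_X {k : ℕ} (h : k < 24) : b k = X gE k := by
  rw [b, if_pos (by omega), BX, if_pos h]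
lemma b_H (i : Fin 4) : b (24 + i) = gH i := by
  rw [b, if_pos (by omega), BX, if_neg (by omega)]
  congr 1; fin_cases i <;> rfl
lemma b_Y {k : ℕ} (h : k < 24) : b (28 + k) = X gF k := by
  rw [b, if_neg (by omega)]; congr 1; omega
lemma b_E (i : Fin 4) : b i = gE i := by rw [b_X (by omega), X_low]
lemma b_F (i : Fin 4) : b (28 + i) = gF i := by rw [b_Y (by omega), X_low]

lemma ev_mem {B : ℕ → LieAlgebra.f₄ ℂ} {l : List (ℕ × ℤ)} (h : ∀ p ∈ l, B p.1 ∈ Sp) :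
    ev B l ∈ Sp := by
  induction l with
  | nil => simp
  | cons p l ih =>
    rw [ev_cons]
    exact Sp.add_mem (zsmul_mem (h p (by simp)) _) (ih fun q hq => h q (by simp [hq]))

lemma ck_E28 : ∀ j : Fin 4, ∀ k < 28, ∀ p ∈ tE j k, p.1 < 28 := by decide +kernel

lemma BX_mem {k : ℕ} (h : k < 28) : BX gE gH k ∈ Sp := by
  have := b_mem (k := k) (by omega)
  rwa [b, if_pos h] at this

lemma BX_mem' {k : ℕ} (h : k < 28) : BX gF (fun i => -gH i) k ∈ Sp := by
  by_cases h2 : k < 24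
  · have := b_mem (k := 28 + k) (by omega)
    rwa [b_Y h2, show X gF k = BX gF (fun i => -gH i) k by rw [BX, if_pos h2]] at this
  · rw [BX, if_neg h2, neg_mem_iff, ← b_H]
    exact b_mem (by omega)

lemma tF_lt (q : Fin 4) {k : ℕ} (hk : k < 24) (p : ℕ × ℤ) (hp : p ∈ tF q k) : p.1 < 28 := by
  rcases ck_Fht q k hk p hp with h | h <;> omega

lemma gE_mem (j : Fin 4) : gE j ∈ Sp := by rw [← b_E]; exact b_mem (by omega)
lemma gF_mem (j : Fin 4) : gF j ∈ Sp := by rw [← b_F]; exact b_mem (by omega)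

lemma lie_E_b (j : Fin 4) (k : Fin 52) : ⁅gE j, b k⁆ ∈ Sp := by
  rcases lt_or_ge k.1 24 with h | h
  · rw [b_X h, lie_E_X gS j h]
    exact ev_mem fun p hp => BX_mem (ck_E28 j k (by omega) p hp)
  rcases lt_or_ge k.1 28 with h' | h'
  · obtain ⟨i, hi⟩ : ∃ i : Fin 4, k.1 = 24 + i := ⟨⟨k.1 - 24, by omega⟩, by simp; omega⟩
    rw [hi, b_H, ← lie_skew, g_he]
    exact Sp.neg_mem (zsmul_mem (gE_mem j) _)
  · obtain ⟨i, hi⟩ : ∃ i : ℕ, k.1 = 28 + i := ⟨k.1 - 28, by omega⟩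
    rw [hi, b_Y (by omega), lie_F_X gS.symm j (by omega)]
    exact ev_mem fun p hp => BX_mem' (tF_lt j (by omega) p hp)

lemma lie_F_b (j : Fin 4) (k : Fin 52) : ⁅gF j, b k⁆ ∈ Sp := by
  rcases lt_or_ge k.1 24 with h | h
  · rw [b_X h, lie_F_X gS j h]
    exact ev_mem fun p hp => BX_mem (tF_lt j h p hp)
  rcases lt_or_ge k.1 28 with h' | h'
  · obtain ⟨i, hi⟩ : ∃ i : Fin 4, k.1 = 24 + i := ⟨⟨k.1 - 24, by omega⟩, by simp; omega⟩
    rw [hi, b_H, ← lie_skew, g_hf]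
    exact Sp.neg_mem (Sp.neg_mem (zsmul_mem (gF_mem j) _))
  · obtain ⟨i, hi⟩ : ∃ i : ℕ, k.1 = 28 + i := ⟨k.1 - 28, by omega⟩
    rw [hi, b_Y (by omega), lie_E_X gS.symm j (by omega)]
    exact ev_mem fun p hp => BX_mem' (ck_E28 j _ (by omega) p hp)

lemma stab {x : LieAlgebra.f₄ ℂ} (h : ∀ k : Fin 52, ⁅x, b k⁆ ∈ Sp) {y : LieAlgebra.f₄ ℂ}
    (hy : y ∈ Sp) : ⁅x, y⁆ ∈ Sp := by
  have : Sp ≤ Sp.comap (LieAlgebra.ad ℂ _ x) := by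
    refine Submodule.span_le.2 ?_
    rintro _ ⟨k, rfl⟩
    exact h k
  exact this hy

/-- Elements stabilizing the span. -/
noncomputable def stabSub : LieSubalgebra ℂ (LieAlgebra.f₄ ℂ) where
  carrier := {x | ∀ y ∈ Sp, ⁅x, y⁆ ∈ Sp}
  add_mem' := fun {a c} ha hc y hy => by rw [add_lie]; exact Sp.add_mem (ha y hy) (hc y hy)
  zero_mem' := fun y _ => by rw [zero_lie]; exact Sp.zero_mem
  smul_mem' := fun t a ha y hy => by rw [smul_lie]; exact Sp.smul_mem t (ha y hy)
  lie_mem' := fun {a c} ha hc y hy => by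
    rw [lie_lie]; exact Sp.sub_mem (ha _ (hc y hy)) (hc _ (ha y hy))

/-- The span as a Lie subalgebra. -/
noncomputable def spSub : LieSubalgebra ℂ (LieAlgebra.f₄ ℂ) where
  __ := Sp
  lie_mem' := fun {a c} _ hc =>
    mem_of_gens stabSub (fun i _ hy => stab (lie_E_b i) hy) (fun i _ hy => stab (lie_F_b i) hy)
      a c hc

lemma mem_Sp (x : LieAlgebra.f₄ ℂ) : x ∈ Sp := mem_of_gens spSub gE_mem gF_mem x

lemma exists_coords (x : LieAlgebra.f₄ ℂ) : ∃ c : Fin 52 → ℂ, x = ∑ k, c k • b k := by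
  obtain ⟨c, hc⟩ := (Submodule.mem_span_range_iff_exists_fun ℂ).1 (mem_Sp x)
  exact ⟨c, hc.symm⟩

end Gens

set_option maxHeartbeats 4000000 in
/-- Matrices of the 52 basis vectors in the 27-dimensional representation. -/
def tabM : List (List ((ℕ × ℕ) × ℤ)) := [
  [((0, 1), 1), ((5, 7), 1), ((6, 9), 1), ((8, 11), 1), ((10, 12), 1), ((10, 13), 1), ((12, 15), 1), ((13, 15), 1), ((16, 17), 1), ((18, 19), 1), ((20, 21), 1), ((25, 26), 1)],
  [((1, 2), 1), ((3, 5), 1), ((4, 6), 1), ((8, 10), 1), ((11, 13), 1), ((11, 14), 1), ((13, 16), 1), ((14, 16), 1), ((15, 17), 1), ((19, 22), 1), ((21, 23), 1), ((24, 25), 1)],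
  [((2, 3), 1), ((6, 8), 1), ((9, 11), 1), ((16, 18), 1), ((17, 19), 1), ((23, 24), 1)],
  [((3, 4), 1), ((5, 6), 1), ((7, 9), 1), ((18, 20), 1), ((19, 21), 1), ((22, 23), 1)],
  [((0, 2), 1), ((3, 7), -1), ((4, 9), -1), ((8, 12), -1), ((8, 14), 1), ((10, 16), 1), ((11, 15), -1), ((12, 17), 1), ((14, 17), -1), ((18, 22), 1), ((20, 23), 1), ((24, 26), -1)],
  [((1, 3), 1), ((2, 5), -1), ((4, 8), 1), ((6, 10), -1), ((9, 13), -1), ((9, 14), -1), ((13, 18), 1), ((14, 18), 1), ((15, 19), 1), ((17, 22), -1), ((21, 24), 1), ((23, 25), -1)],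
  [((2, 4), 1), ((5, 8), -1), ((7, 11), -1), ((16, 20), 1), ((17, 21), 1), ((22, 24), -1)],
  [((0, 3), 1), ((2, 7), 1), ((4, 11), -1), ((6, 12), 1), ((6, 14), -1), ((9, 15), 1), ((10, 18), 1), ((12, 19), 1), ((14, 19), -1), ((16, 22), -1), ((20, 24), 1), ((23, 26), 1)],
  [((1, 5), -2), ((4, 10), -2), ((9, 16), 2), ((11, 18), 2), ((15, 22), -2), ((21, 25), -2)],
  [((1, 4), 1), ((2, 6), -1), ((3, 8), -1), ((5, 10), 1), ((7, 13), 1), ((7, 14), 1), ((13, 20), 1), ((14, 20), 1), ((15, 21), 1), ((17, 23), -1), ((19, 24), -1), ((22, 25), 1)],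
  [((0, 5), -1), ((1, 7), 1), ((4, 12), 1), ((4, 13), 1), ((6, 16), 1), ((8, 18), 1), ((9, 17), -1), ((11, 19), -1), ((12, 22), -1), ((13, 22), -1), ((20, 25), -1), ((21, 26), 1)],
  [((0, 4), 1), ((2, 9), 1), ((3, 11), 1), ((5, 12), -1), ((5, 14), 1), ((7, 15), -1), ((10, 20), 1), ((12, 21), 1), ((14, 21), -1), ((16, 23), -1), ((18, 24), -1), ((22, 26), -1)],
  [((1, 6), -2), ((3, 10), 2), ((7, 16), -2), ((11, 20), 2), ((15, 23), -2), ((19, 25), 2)],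
  [((0, 7), 2), ((4, 15), -2), ((6, 17), -2), ((8, 19), -2), ((10, 22), -2), ((20, 26), 2)],
  [((0, 6), -1), ((1, 9), 1), ((3, 12), -1), ((3, 13), -1), ((5, 16), -1), ((7, 17), 1), ((8, 20), 1), ((11, 21), -1), ((12, 23), -1), ((13, 23), -1), ((18, 25), 1), ((19, 26), -1)],
  [((1, 8), 2), ((2, 10), 2), ((7, 18), 2), ((9, 20), 2), ((15, 24), 2), ((17, 25), 2)],
  [((0, 9), 2), ((3, 15), 2), ((5, 17), 2), ((8, 21), -2), ((10, 23), -2), ((18, 26), -2)],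
  [((0, 8), 1), ((1, 11), -1), ((2, 12), -1), ((2, 13), -1), ((5, 18), 1), ((6, 20), 1), ((7, 19), -1), ((9, 21), -1), ((12, 24), 1), ((13, 24), 1), ((16, 25), 1), ((17, 26), -1)],
  [((0, 11), -2), ((2, 15), 2), ((5, 19), -2), ((6, 21), -2), ((10, 24), 2), ((16, 26), -2)],
  [((0, 10), -1), ((1, 12), -1), ((1, 14), 1), ((2, 16), 1), ((3, 18), 1), ((4, 20), 1), ((7, 22), 1), ((9, 23), 1), ((11, 24), 1), ((12, 25), -1), ((14, 25), 1), ((15, 26), -1)],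
  [((0, 13), 1), ((0, 14), 1), ((1, 15), 1), ((2, 17), -1), ((3, 19), -1), ((4, 21), -1), ((5, 22), 1), ((6, 23), 1), ((8, 24), 1), ((10, 25), -1), ((13, 26), -1), ((14, 26), -1)],
  [((0, 16), -2), ((1, 17), -2), ((3, 22), 2), ((4, 23), 2), ((8, 25), -2), ((11, 26), -2)],
  [((0, 18), 2), ((1, 19), 2), ((2, 22), 2), ((4, 24), -2), ((6, 25), -2), ((9, 26), -2)],
  [((0, 20), -2), ((1, 21), -2), ((2, 23), -2), ((3, 24), -2), ((5, 25), -2), ((7, 26), -2)],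
  [((0, 0), 1), ((1, 1), -1), ((5, 5), 1), ((6, 6), 1), ((7, 7), -1), ((8, 8), 1), ((9, 9), -1), ((10, 10), 2), ((11, 11), -1), ((15, 15), -2), ((16, 16), 1), ((17, 17), -1), ((18, 18), 1), ((19, 19), -1), ((20, 20), 1), ((21, 21), -1), ((25, 25), 1), ((26, 26), -1)],
  [((1, 1), 1), ((2, 2), -1), ((3, 3), 1), ((4, 4), 1), ((5, 5), -1), ((6, 6), -1), ((8, 8), 1), ((10, 10), -1), ((11, 11), 2), ((15, 15), 1), ((16, 16), -2), ((17, 17), -1), ((19, 19), 1), ((21, 21), 1), ((22, 22), -1), ((23, 23), -1), ((24, 24), 1), ((25, 25), -1)],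
  [((2, 2), 1), ((3, 3), -1), ((6, 6), 1), ((8, 8), -1), ((9, 9), 1), ((11, 11), -1), ((16, 16), 1), ((17, 17), 1), ((18, 18), -1), ((19, 19), -1), ((23, 23), 1), ((24, 24), -1)],
  [((3, 3), 1), ((4, 4), -1), ((5, 5), 1), ((6, 6), -1), ((7, 7), 1), ((9, 9), -1), ((18, 18), 1), ((19, 19), 1), ((20, 20), -1), ((21, 21), -1), ((22, 22), 1), ((23, 23), -1)],
  [((1, 0), 1), ((7, 5), 1), ((9, 6), 1), ((11, 8), 1), ((12, 10), 1), ((13, 10), 1), ((15, 12), 1), ((15, 13), 1), ((17, 16), 1), ((19, 18), 1), ((21, 20), 1), ((26, 25), 1)],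
  [((2, 1), 1), ((5, 3), 1), ((6, 4), 1), ((10, 8), 1), ((13, 11), 1), ((14, 11), 1), ((16, 13), 1), ((16, 14), 1), ((17, 15), 1), ((22, 19), 1), ((23, 21), 1), ((25, 24), 1)],
  [((3, 2), 1), ((8, 6), 1), ((11, 9), 1), ((18, 16), 1), ((19, 17), 1), ((24, 23), 1)],
  [((4, 3), 1), ((6, 5), 1), ((9, 7), 1), ((20, 18), 1), ((21, 19), 1), ((23, 22), 1)],
  [((2, 0), -1), ((7, 3), 1), ((9, 4), 1), ((12, 8), 1), ((14, 8), -1), ((15, 11), 1), ((16, 10), -1), ((17, 12), -1), ((17, 14), 1), ((22, 18), -1), ((23, 20), -1), ((26, 24), 1)],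
  [((3, 1), -1), ((5, 2), 1), ((8, 4), -1), ((10, 6), 1), ((13, 9), 1), ((14, 9), 1), ((18, 13), -1), ((18, 14), -1), ((19, 15), -1), ((22, 17), 1), ((24, 21), -1), ((25, 23), 1)],
  [((4, 2), -1), ((8, 5), 1), ((11, 7), 1), ((20, 16), -1), ((21, 17), -1), ((24, 22), 1)],
  [((3, 0), 1), ((7, 2), 1), ((11, 4), -1), ((12, 6), 1), ((14, 6), -1), ((15, 9), 1), ((18, 10), 1), ((19, 12), 1), ((19, 14), -1), ((22, 16), -1), ((24, 20), 1), ((26, 23), 1)],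
  [((5, 1), -2), ((10, 4), -2), ((16, 9), 2), ((18, 11), 2), ((22, 15), -2), ((25, 21), -2)],
  [((4, 1), 1), ((6, 2), -1), ((8, 3), -1), ((10, 5), 1), ((13, 7), 1), ((14, 7), 1), ((20, 13), 1), ((20, 14), 1), ((21, 15), 1), ((23, 17), -1), ((24, 19), -1), ((25, 22), 1)],
  [((5, 0), 1), ((7, 1), -1), ((12, 4), -1), ((13, 4), -1), ((16, 6), -1), ((17, 9), 1), ((18, 8), -1), ((19, 11), 1), ((22, 12), 1), ((22, 13), 1), ((25, 20), 1), ((26, 21), -1)],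
  [((4, 0), -1), ((9, 2), -1), ((11, 3), -1), ((12, 5), 1), ((14, 5), -1), ((15, 7), 1), ((20, 10), -1), ((21, 12), -1), ((21, 14), 1), ((23, 16), 1), ((24, 18), 1), ((26, 22), 1)],
  [((6, 1), 2), ((10, 3), -2), ((16, 7), 2), ((20, 11), -2), ((23, 15), 2), ((25, 19), -2)],
  [((7, 0), 2), ((15, 4), -2), ((17, 6), -2), ((19, 8), -2), ((22, 10), -2), ((26, 20), 2)],
  [((6, 0), -1), ((9, 1), 1), ((12, 3), -1), ((13, 3), -1), ((16, 5), -1), ((17, 7), 1), ((20, 8), 1), ((21, 11), -1), ((23, 12), -1), ((23, 13), -1), ((25, 18), 1), ((26, 19), -1)],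
  [((8, 1), 2), ((10, 2), 2), ((18, 7), 2), ((20, 9), 2), ((24, 15), 2), ((25, 17), 2)],
  [((9, 0), -2), ((15, 3), -2), ((17, 5), -2), ((21, 8), 2), ((23, 10), 2), ((26, 18), 2)],
  [((8, 0), -1), ((11, 1), 1), ((12, 2), 1), ((13, 2), 1), ((18, 5), -1), ((19, 7), 1), ((20, 6), -1), ((21, 9), 1), ((24, 12), -1), ((24, 13), -1), ((25, 16), -1), ((26, 17), 1)],
  [((11, 0), -2), ((15, 2), 2), ((19, 5), -2), ((21, 6), -2), ((24, 10), 2), ((26, 16), -2)],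
  [((10, 0), -1), ((12, 1), -1), ((14, 1), 1), ((16, 2), 1), ((18, 3), 1), ((20, 4), 1), ((22, 7), 1), ((23, 9), 1), ((24, 11), 1), ((25, 12), -1), ((25, 14), 1), ((26, 15), -1)],
  [((13, 0), -1), ((14, 0), -1), ((15, 1), -1), ((17, 2), 1), ((19, 3), 1), ((21, 4), 1), ((22, 5), -1), ((23, 6), -1), ((24, 8), -1), ((25, 10), 1), ((26, 13), 1), ((26, 14), 1)],
  [((16, 0), -2), ((17, 1), -2), ((22, 3), 2), ((23, 4), 2), ((25, 8), -2), ((26, 11), -2)],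
  [((18, 0), -2), ((19, 1), -2), ((22, 2), -2), ((24, 4), 2), ((25, 6), 2), ((26, 9), 2)],
  [((20, 0), -2), ((21, 1), -2), ((23, 2), -2), ((24, 3), -2), ((25, 5), -2), ((26, 7), -2)]]

set_option maxHeartbeats 4000000 in
/-- Functionals dual to the basis (up to `tabD`). -/
def tabPhi : List (List ((ℕ × ℕ) × ℤ)) := [
  [((0, 1), 1)],
  [((1, 2), 1)],
  [((2, 3), 1)],
  [((3, 4), 1)],
  [((0, 2), 1)],
  [((1, 3), 1)],
  [((2, 4), 1)],
  [((0, 3), 1)],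
  [((1, 5), 1)],
  [((1, 4), 1)],
  [((0, 5), 1)],
  [((0, 4), 1)],
  [((1, 6), 1)],
  [((0, 7), 1)],
  [((0, 6), 1)],
  [((1, 8), 1)],
  [((0, 9), 1)],
  [((0, 8), 1)],
  [((0, 11), 1)],
  [((0, 10), 1)],
  [((0, 13), 1)],
  [((0, 16), 1)],
  [((0, 18), 1)],
  [((0, 20), 1)],
  [((0, 0), 1)],
  [((0, 0), 1), ((1, 1), 1)],
  [((0, 0), 1), ((1, 1), 1), ((2, 2), 1)],
  [((2, 2), 1), ((3, 3), 1)],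
  [((1, 0), 1)],
  [((2, 1), 1)],
  [((3, 2), 1)],
  [((4, 3), 1)],
  [((2, 0), 1)],
  [((3, 1), 1)],
  [((4, 2), 1)],
  [((3, 0), 1)],
  [((5, 1), 1)],
  [((4, 1), 1)],
  [((5, 0), 1)],
  [((4, 0), 1)],
  [((6, 1), 1)],
  [((7, 0), 1)],
  [((6, 0), 1)],
  [((8, 1), 1)],
  [((9, 0), 1)],
  [((8, 0), 1)],
  [((11, 0), 1)],
  [((10, 0), 1)],
  [((13, 0), 1)],
  [((16, 0), 1)],
  [((18, 0), 1)],
  [((20, 0), 1)]]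

/-- Values of the functionals on the basis vectors. -/
def tabD : List ℤ := [
  1, 1, 1, 1, 1, 1, 1, 1, -2, 1, -1, 1, -2, 2, -1, 2, 2, 1, -2, -1, 1, -2, 2, -2, 1, 1, 1, 1, 1, 1, 1, 1, -1, -1, -1, 1, -2, 1, 1, -1, 2, 2, -1, 2, -2, -1, -2, -1, -1, -2, -2, -2]

set_option maxHeartbeats 4000000 in
/-- A basis of the centralizer of `e` in coordinates. -/
def tabV : List (List (ℕ × ℤ)) := [
  [(0, 1), (1, 1)],
  [(3, 1)],
  [(4, 1)],
  [(11, -2), (12, 1)],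
  [(13, 1), (14, 1)],
  [(16, 1)],
  [(18, -1), (19, 2)],
  [(21, 1)],
  [(23, 1)],
  [(24, 2), (25, 4), (26, 6), (27, 3)],
  [(30, 1)],
  [(33, 1), (34, 2)],
  [(35, -2), (36, 1)],
  [(43, 1)],
  [(46, -1), (47, 2)],
  [(50, 1)]]

/-- Free coordinates and the value there of the basis vectors of the centralizer. -/
def tabFree : List (ℕ × ℤ) := [
  (1, 1),
  (3, 1),
  (4, 1),
  (12, 1),
  (14, 1),
  (16, 1),
  (19, 2),
  (21, 1),
  (23, 1),
  (27, 3),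
  (30, 1),
  (34, 2),
  (36, 1),
  (43, 1),
  (47, 2),
  (50, 1)]

set_option maxHeartbeats 4000000 in
/-- Matrices of the basis of the centralizer. -/
def tabVM : List (List ((ℕ × ℕ) × ℤ)) := [
  [((0, 1), 1), ((1, 2), 1), ((3, 5), 1), ((4, 6), 1), ((5, 7), 1), ((6, 9), 1), ((8, 10), 1), ((8, 11), 1), ((10, 12), 1), ((10, 13), 1), ((11, 13), 1), ((11, 14), 1), ((12, 15), 1), ((13, 15), 1), ((13, 16), 1), ((14, 16), 1), ((15, 17), 1), ((16, 17), 1), ((18, 19), 1), ((19, 22), 1), ((20, 21), 1), ((21, 23), 1), ((24, 25), 1), ((25, 26), 1)],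
  [((3, 4), 1), ((5, 6), 1), ((7, 9), 1), ((18, 20), 1), ((19, 21), 1), ((22, 23), 1)],
  [((0, 2), 1), ((3, 7), -1), ((4, 9), -1), ((8, 12), -1), ((8, 14), 1), ((10, 16), 1), ((11, 15), -1), ((12, 17), 1), ((14, 17), -1), ((18, 22), 1), ((20, 23), 1), ((24, 26), -1)],
  [((0, 4), -2), ((1, 6), -2), ((2, 9), -2), ((3, 10), 2), ((3, 11), -2), ((5, 12), 2), ((5, 14), -2), ((7, 15), 2), ((7, 16), -2), ((10, 20), -2), ((11, 20), 2), ((12, 21), -2), ((14, 21), 2), ((15, 23), -2), ((16, 23), 2), ((18, 24), 2), ((19, 25), 2), ((22, 26), 2)],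
  [((0, 6), -1), ((0, 7), 2), ((1, 9), 1), ((3, 12), -1), ((3, 13), -1), ((4, 15), -2), ((5, 16), -1), ((6, 17), -2), ((7, 17), 1), ((8, 19), -2), ((8, 20), 1), ((10, 22), -2), ((11, 21), -1), ((12, 23), -1), ((13, 23), -1), ((18, 25), 1), ((19, 26), -1), ((20, 26), 2)],
  [((0, 9), 2), ((3, 15), 2), ((5, 17), 2), ((8, 21), -2), ((10, 23), -2), ((18, 26), -2)],
  [((0, 10), -2), ((0, 11), 2), ((1, 12), -2), ((1, 14), 2), ((2, 15), -2), ((2, 16), 2), ((3, 18), 2), ((4, 20), 2), ((5, 19), 2), ((6, 21), 2), ((7, 22), 2), ((9, 23), 2), ((10, 24), -2), ((11, 24), 2), ((12, 25), -2), ((14, 25), 2), ((15, 26), -2), ((16, 26), 2)],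
  [((0, 16), -2), ((1, 17), -2), ((3, 22), 2), ((4, 23), 2), ((8, 25), -2), ((11, 26), -2)],
  [((0, 20), -2), ((1, 21), -2), ((2, 23), -2), ((3, 24), -2), ((5, 25), -2), ((7, 26), -2)],
  [((0, 0), 2), ((1, 1), 2), ((2, 2), 2), ((3, 3), 1), ((4, 4), 1), ((5, 5), 1), ((6, 6), 1), ((7, 7), 1), ((9, 9), 1), ((18, 18), -1), ((19, 19), -1), ((20, 20), -1), ((21, 21), -1), ((22, 22), -1), ((23, 23), -1), ((24, 24), -2), ((25, 25), -2), ((26, 26), -2)],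
  [((3, 2), 1), ((8, 6), 1), ((11, 9), 1), ((18, 16), 1), ((19, 17), 1), ((24, 23), 1)],
  [((3, 1), -1), ((4, 2), -2), ((5, 2), 1), ((8, 4), -1), ((8, 5), 2), ((10, 6), 1), ((11, 7), 2), ((13, 9), 1), ((14, 9), 1), ((18, 13), -1), ((18, 14), -1), ((19, 15), -1), ((20, 16), -2), ((21, 17), -2), ((22, 17), 1), ((24, 21), -1), ((24, 22), 2), ((25, 23), 1)],
  [((3, 0), -2), ((5, 1), -2), ((7, 2), -2), ((10, 4), -2), ((11, 4), 2), ((12, 6), -2), ((14, 6), 2), ((15, 9), -2), ((16, 9), 2), ((18, 10), -2), ((18, 11), 2), ((19, 12), -2), ((19, 14), 2), ((22, 15), -2), ((22, 16), 2), ((24, 20), -2), ((25, 21), -2), ((26, 23), -2)],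
  [((8, 1), 2), ((10, 2), 2), ((18, 7), 2), ((20, 9), 2), ((24, 15), 2), ((25, 17), 2)],
  [((10, 0), -2), ((11, 0), 2), ((12, 1), -2), ((14, 1), 2), ((15, 2), -2), ((16, 2), 2), ((18, 3), 2), ((19, 5), 2), ((20, 4), 2), ((21, 6), 2), ((22, 7), 2), ((23, 9), 2), ((24, 10), -2), ((24, 11), 2), ((25, 12), -2), ((25, 14), 2), ((26, 15), -2), ((26, 16), 2)],
  [((18, 0), -2), ((19, 1), -2), ((22, 2), -2), ((24, 4), 2), ((25, 6), 2), ((26, 9), 2)]]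

set_option maxHeartbeats 4000000 in
/-- Functionals certifying the equations of the centralizer. -/
def tabPsi : List (List ((ℕ × ℕ) × ℤ)) := [
  [((0, 2), 12)],
  [],
  [((2, 4), 12)],
  [],
  [],
  [((1, 5), 6)],
  [((1, 4), -12), ((1, 5), 6)],
  [((0, 4), 8), ((0, 5), 4), ((1, 6), 4)],
  [((0, 4), -4), ((0, 5), 4), ((1, 6), -2)],
  [((0, 4), -4), ((0, 5), 4), ((1, 6), 4)],
  [((0, 7), -6)],
  [((0, 6), 12), ((0, 7), -6)],
  [],
  [((0, 9), 6)],
  [],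
  [((0, 8), -6)],
  [],
  [((0, 10), 12)],
  [((0, 13), -6)],
  [],
  [((0, 16), 6)],
  [],
  [((0, 20), 6)],
  [],
  [((0, 1), 8), ((1, 2), 4), ((3, 4), -4)],
  [((0, 1), 4), ((1, 2), 8), ((3, 4), -8)],
  [((3, 4), -12)],
  [],
  [((0, 0), -12)],
  [((0, 0), -12), ((1, 1), -12)],
  [],
  [((2, 2), -12), ((3, 3), -12)],
  [((2, 1), -12)],
  [((3, 2), -6)],
  [],
  [((3, 1), 12), ((4, 2), 6)],
  [],
  [((4, 2), 6)],
  [((3, 0), -4), ((4, 1), -4), ((5, 1), 4)],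
  [((3, 0), 8), ((4, 1), -4), ((5, 1), 4)],
  [((3, 0), -4), ((4, 1), -4), ((5, 1), -2)],
  [((5, 0), -6), ((6, 1), -3)],
  [((6, 1), -6)],
  [],
  [((6, 0), 6)],
  [((8, 1), -6)],
  [((8, 0), 6)],
  [],
  [((10, 0), 12)],
  [((13, 0), 6)],
  [],
  [((18, 0), 6)]]

/-- Triples `(b, c, n)` with `⁅v b, v c⁆ = n v a`. -/
def tabBr : List (ℕ × ℕ × ℤ) := [
  (0, 0, 0),
  (15, 8, 4),
  (3, 11, 4),
  (9, 3, 1),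
  (9, 4, 1),
  (0, 4, 1),
  (9, 6, 2),
  (4, 3, 2),
  (9, 8, 3),
  (6, 14, 4),
  (10, 9, 1),
  (11, 9, 1),
  (12, 9, 1),
  (2, 14, 2),
  (14, 9, 2),
  (15, 9, 3)]

attribute [local instance] LieRing.ofAssociativeRing

/-! ### The 27-dimensional representation -/

section Rep

open CartanMatrix

/-- Lookup. -/
def M (k : ℕ) : SM := tabM.getD k []
/-- Lookup. -/
def Phi (k : ℕ) : SM := tabPhi.getD k []
/-- Lookup. -/
def D (k : ℕ) : ℤ := tabD.getD k 0
/-- Lookup. -/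
def V (k : ℕ) : List (ℕ × ℤ) := tabV.getD k []
/-- Lookup. -/
def VM (k : ℕ) : SM := tabVM.getD k []
/-- Lookup. -/
def Psi (k : ℕ) : SM := tabPsi.getD k []
/-- Lookup. -/
def fr (k : ℕ) : ℕ := (tabFree.getD k (0, 0)).1
/-- Lookup. -/
def sv (k : ℕ) : ℤ := (tabFree.getD k (0, 0)).2
/-- Lookup. -/
def br (k : ℕ) : ℕ × ℕ × ℤ := tabBr.getD k (0, 0, 0)

/-- Images of the generators. -/
noncomputable def gen : Generators (Fin 4) → Module.End ℂ (ℕ →₀ ℂ)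
  | .H i => ev U (M (24 + i))
  | .E i => ev U (M i)
  | .F i => ev U (M (28 + i))

/-- The representation of the free Lie algebra. -/
noncomputable def ρ₀ : FreeLieAlgebra ℂ (Generators (Fin 4)) →ₗ⁅ℂ⁆ Module.End ℂ (ℕ →₀ ℂ) :=
  FreeLieAlgebra.lift ℂ gen

lemma ρ₀_of (g : Generators (Fin 4)) : ρ₀ (FreeLieAlgebra.of ℂ g) = gen g := by
  simp [ρ₀, FreeLieAlgebra.lift_of_apply]

lemma ρ₀_ad (x y : FreeLieAlgebra ℂ (Generators (Fin 4))) (p q : SM) (hx : ρ₀ x = ev U p)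
    (hy : ρ₀ y = ev U q) (n : ℕ) :
    ρ₀ ((LieAlgebra.ad ℂ _ x ^ n) y) = ev U ((com p)^[n] q) := by
  induction n with
  | zero => exact hy
  | succ n ih =>
    rw [pow_succ', Module.End.mul_apply, LieAlgebra.ad_apply, LieHom.map_lie, ih, hx,
      Function.iterate_succ_apply', ev_com]

lemma ck_HH : ∀ i j : Fin 4, isZ (com (M (24 + i)) (M (24 + j))) = true := by decide +kernel
lemma ck_EF : ∀ i j : Fin 4, isZ (com (M i) (M (28 + j)) ++
    if i = j then sca (-1) (M (24 + i)) else []) = true := by decide +kernel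
lemma ck_HE : ∀ i j : Fin 4, isZ (com (M (24 + i)) (M j) ++ sca (-1) (sca (F₄ i j) (M j))) = true := by
  decide +kernel
lemma ck_HF : ∀ i j : Fin 4, isZ (com (M (24 + i)) (M (28 + j)) ++ sca (F₄ i j) (M (28 + j))) = true := by
  decide +kernel
lemma ck_adE : ∀ i j : Fin 4, isZ ((com (M i))^[(-F₄ i j).toNat] (com (M i) (M j))) = true := by
  decide +kernel
lemma ck_adF : ∀ i j : Fin 4,
    isZ ((com (M (28 + i)))^[(-F₄ i j).toNat] (com (M (28 + i)) (M (28 + j)))) = true := by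
  decide +kernel

lemma ρ₀_rel {x : FreeLieAlgebra ℂ (Generators (Fin 4))} (h : x ∈ Relations.toSet ℂ F₄) :
    ρ₀ x = 0 := by
  rcases h with ((((h | h) | h) | h) | h) | h <;> obtain ⟨⟨i, j⟩, rfl⟩ := h
  · rw [← ev_eq_zero U (ck_HH i j), ev_com]
    simp [Relations.HH, ρ₀_of, gen]
  · rw [← ev_eq_zero U (ck_EF i j), ev_append, ev_com]
    by_cases hij : i = j
    · subst hij
      simp [Relations.EF, ρ₀_of, gen, sub_eq_add_neg]
    · simp [Relations.EF, ρ₀_of, gen, hij]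
  · rw [← ev_eq_zero U (ck_HE i j), ev_append, ev_com, ev_sca, ev_sca, neg_one_smul,
      ← sub_eq_add_neg]
    rw [Relations.HE]
    simp only [Function.uncurry_apply_pair, Function.comp_apply, map_sub, LieHom.map_lie,
      map_zsmul, ρ₀_of, gen]
  · rw [← ev_eq_zero U (ck_HF i j), ev_append, ev_com, ev_sca]
    rw [Relations.HF]
    simp only [Function.uncurry_apply_pair, Function.comp_apply, map_add, LieHom.map_lie,
      map_zsmul, ρ₀_of, gen]
  · rw [← ev_eq_zero U (ck_adE i j), Relations.adE]
    refine ρ₀_ad _ _ _ _ (ρ₀_of _) ?_ _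
    rw [LieHom.map_lie, ev_com]
    simp only [Function.comp_apply, ρ₀_of, gen]
  · rw [← ev_eq_zero U (ck_adF i j), Relations.adF]
    refine ρ₀_ad _ _ _ _ (ρ₀_of _) ?_ _
    rw [LieHom.map_lie, ev_com]
    simp only [Function.comp_apply, ρ₀_of, gen]

lemma toIdeal_le : Relations.toIdeal ℂ F₄ ≤ ρ₀.ker :=
  LieSubmodule.lieSpan_le.2 fun _ hx => LieHom.mem_ker.2 (ρ₀_rel hx)

/-- The underlying linear map of the representation of `f₄`. -/
noncomputable def ρl : LieAlgebra.f₄ ℂ →ₗ[ℂ] Module.End ℂ (ℕ →₀ ℂ) :=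
  (Relations.toIdeal ℂ F₄).toSubmodule.liftQ (ρ₀ : FreeLieAlgebra ℂ (Generators (Fin 4)) →ₗ[ℂ] Module.End ℂ (ℕ →₀ ℂ))
    (fun _ hx => LinearMap.mem_ker.2 (LieHom.mem_ker.1 (toIdeal_le hx)))

lemma ρl_π (x : FreeLieAlgebra ℂ (Generators (Fin 4))) : ρl (π x) = ρ₀ x := rfl

/-- The representation of `f₄`. -/
noncomputable def ρ : LieAlgebra.f₄ ℂ →ₗ⁅ℂ⁆ Module.End ℂ (ℕ →₀ ℂ) where
  __ := ρl
  map_lie' := fun {x y} => by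
    obtain ⟨x, rfl⟩ := π_surj x
    obtain ⟨y, rfl⟩ := π_surj y
    show ρl ⁅π x, π y⁆ = ⁅ρl (π x), ρl (π y)⁆
    rw [← LieHom.map_lie, ρl_π, ρl_π, ρl_π, LieHom.map_lie]

lemma ρ_π (x : FreeLieAlgebra ℂ (Generators (Fin 4))) : ρ (π x) = ρ₀ x := rfl

lemma ρ_E (i : Fin 4) : ρ (gE i) = ev U (M i) := by rw [gE, ρ_π, ρ₀_of]; rfl
lemma ρ_F (i : Fin 4) : ρ (gF i) = ev U (M (28 + i)) := by rw [gF, ρ_π, ρ₀_of]; rfl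
lemma ρ_H (i : Fin 4) : ρ (gH i) = ev U (M (24 + i)) := by rw [gH, ρ_π, ρ₀_of]; rfl

lemma ck_ME : ∀ k < 24, 4 ≤ k → isZ (com (M (par k).1) (M (par k).2) ++ sca (-1) (M k)) = true := by
  decide +kernel
lemma ck_MF : ∀ k < 24, 4 ≤ k →
    isZ (com (M (28 + (par k).1)) (M (28 + (par k).2)) ++ sca (-1) (M (28 + k))) = true := by
  decide +kernel

lemma ρ_XE (k : ℕ) (hk : k < 24) : ρ (X gE k) = ev U (M k) := by
  induction k using Nat.strong_induction_on with
  | _ k ih =>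
    rcases lt_or_ge k 4 with h | h
    · obtain ⟨i, rfl⟩ : ∃ i : Fin 4, k = i := ⟨⟨k, h⟩, rfl⟩
      rw [X_low, ρ_E]
    · have hp := (ck_par k hk h).1
      rw [X_step gE hk h, LieHom.map_lie, ih _ hp (hp.trans hk), ρ_E, ← ev_com]
      exact ev_eq_of_isZ U (ck_ME k hk h)

lemma ρ_XF (k : ℕ) (hk : k < 24) : ρ (X gF k) = ev U (M (28 + k)) := by
  induction k using Nat.strong_induction_on with
  | _ k ih =>
    rcases lt_or_ge k 4 with h | h
    · obtain ⟨i, rfl⟩ : ∃ i : Fin 4, k = i := ⟨⟨k, h⟩, rfl⟩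
      rw [X_low, ρ_F]
    · have hp := (ck_par k hk h).1
      rw [X_step gF hk h, LieHom.map_lie, ih _ hp (hp.trans hk), ρ_F, ← ev_com]
      exact ev_eq_of_isZ U (ck_MF k hk h)

lemma ρ_b {k : ℕ} (hk : k < 52) : ρ (b k) = ev U (M k) := by
  rcases lt_or_ge k 24 with h | h
  · rw [b_X h, ρ_XE k h]
  rcases lt_or_ge k 28 with h' | h'
  · obtain ⟨i, rfl⟩ : ∃ i : Fin 4, k = 24 + i := ⟨⟨k - 24, by omega⟩, by simp; omega⟩
    rw [b_H, ρ_H]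
  · obtain ⟨i, rfl⟩ : ∃ i : ℕ, k = 28 + i := ⟨k - 28, by omega⟩
    rw [b_Y (by omega), ρ_XF i (by omega)]

lemma ρ_ev {l : List (ℕ × ℤ)} (h : ∀ p ∈ l, p.1 < 52) : ρ (ev b l) = ev U (act M l) := by
  rw [ev_act]
  refine (map_ev (ρ : LieAlgebra.f₄ ℂ →ₗ[ℂ] Module.End ℂ (ℕ →₀ ℂ)).toAddMonoidHom b l).trans ?_
  exact ev_congr fun p hp => ρ_b (h p hp)

/-! ### Coordinates -/

/-- Coordinate functionals. -/
noncomputable def crd (k : ℕ) : LieAlgebra.f₄ ℂ →ₗ[ℂ] ℂ :=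
  (D k : ℂ)⁻¹ • (fn (Phi k) ∘ₗ (ρ : LieAlgebra.f₄ ℂ →ₗ[ℂ] Module.End ℂ (ℕ →₀ ℂ)))

lemma ck_D : ∀ k < 52, D k ≠ 0 := by decide +kernel
lemma ck_Phi : ∀ k < 52, ∀ l < 52, pair (Phi k) (M l) = if l = k then D k else 0 := by decide +kernel

lemma crd_b {k l : ℕ} (hk : k < 52) (hl : l < 52) : crd k (b l) = if l = k then 1 else 0 := by
  have hD : (D k : ℂ) ≠ 0 := Int.cast_ne_zero.2 (ck_D k hk)
  show (D k : ℂ)⁻¹ * fn (Phi k) (ρ (b l)) = _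
  rw [ρ_b hl, fn_ev, ck_Phi k hk l hl]
  split_ifs <;> simp [hD]

lemma eq_sum_crd (x : LieAlgebra.f₄ ℂ) : x = ∑ k : Fin 52, crd k x • b k := by
  obtain ⟨c, hc⟩ := exists_coords x
  have : ∀ k : Fin 52, crd k x = c k := fun k => by
    rw [hc, map_sum]
    simp [crd_b k.2, Fin.val_inj]
  simp only [this]
  exact hc

lemma ext_crd {x y : LieAlgebra.f₄ ℂ} (h : ∀ k < 52, crd k x = crd k y) : x = y := by
  rw [eq_sum_crd x, eq_sum_crd y]
  exact Finset.sum_congr rfl fun k _ => by rw [h k k.2]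

lemma ρ_inj {x y : LieAlgebra.f₄ ℂ} (h : ρ x = ρ y) : x = y :=
  ext_crd fun k _ => by
    show (D k : ℂ)⁻¹ * fn (Phi k) (ρ x) = (D k : ℂ)⁻¹ * fn (Phi k) (ρ y)
    rw [h]

lemma crd_ev {k : ℕ} (hk : k < 52) {l : List (ℕ × ℤ)} (h : ∀ p ∈ l, p.1 < 52) :
    crd k (ev b l) = (cf l k : ℂ) := by
  induction l with
  | nil => simp [cf]
  | cons p l ih =>
    rw [ev_cons, map_add, map_zsmul, crd_b hk (h p (by simp)), ih fun q hq => h q (by simp [hq]),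
      cf_cons]
    split_ifs <;> simp

/-- Linear functionals agreeing on the spanning family agree. -/
lemma fun_ext {α β : LieAlgebra.f₄ ℂ →ₗ[ℂ] ℂ} (h : ∀ l < 52, α (b l) = β (b l))
    (x : LieAlgebra.f₄ ℂ) : α x = β x := by
  rw [eq_sum_crd x, map_sum, map_sum]
  exact Finset.sum_congr rfl fun k _ => by rw [map_smul, map_smul, h k k.2]

end Rep

/-! ### The triple -/

section Triple

/-- Coordinates of `e`. -/
def le : List (ℕ × ℤ) := [(0, 1), (1, 1), (3, 1)]
/-- Coordinates of `h`. -/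
def lh : List (ℕ × ℤ) := [(24, 2), (25, 2), (27, 1)]
/-- Coordinates of `f`. -/
def lf : List (ℕ × ℤ) := [(28, 2), (29, 2), (31, 1)]

lemma ck_l : (∀ p ∈ le, p.1 < 52) ∧ (∀ p ∈ lh, p.1 < 52) ∧ (∀ p ∈ lf, p.1 < 52) := by
  decide +kernel
lemma ck_ef : isZ (com (act M le) (act M lf) ++ sca (-1) (act M lh)) = true := by decide +kernel
lemma ck_he : isZ (com (act M lh) (act M le) ++ sca (-1) (sca 2 (act M le))) = true := by
  decide +kernel
lemma ck_hf : isZ (com (act M lh) (act M lf) ++ sca (-1) (sca (-2) (act M lf))) = true := by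
  decide +kernel

/-- The nilpotent element. -/
noncomputable def e : LieAlgebra.f₄ ℂ := ev b le
/-- The neutral element. -/
noncomputable def h : LieAlgebra.f₄ ℂ := ev b lh
/-- The opposite nilpotent element. -/
noncomputable def f : LieAlgebra.f₄ ℂ := ev b lf

lemma ρ_e : ρ e = ev U (act M le) := ρ_ev ck_l.1
lemma ρ_h : ρ h = ev U (act M lh) := ρ_ev ck_l.2.1
lemma ρ_f : ρ f = ev U (act M lf) := ρ_ev ck_l.2.2

lemma triple : IsSl2Triple h e f where
  h_ne_zero := fun h0 => by
    have := crd_ev (k := 24) (by norm_num) ck_l.2.1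
    rw [← h, h0, map_zero, show cf lh 24 = 2 by decide +kernel] at this
    norm_num at this
  lie_e_f := ρ_inj <| by
    rw [LieHom.map_lie, ρ_e, ρ_f, ρ_h, ← ev_com]
    exact ev_eq_of_isZ U ck_ef
  lie_h_e_nsmul := ρ_inj <| by
    rw [LieHom.map_lie, map_nsmul, ρ_e, ρ_h, ← ev_com, ev_eq_of_isZ U ck_he, ev_sca]
    exact ofNat_zsmul _ 2
  lie_h_f_nsmul := ρ_inj <| by
    rw [LieHom.map_lie, map_neg, map_nsmul, ρ_f, ρ_h, ← ev_com, ev_eq_of_isZ U ck_hf, ev_sca,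
      neg_smul]
    exact congrArg _ (ofNat_zsmul _ 2)

/-! ### The centralizer -/

/-- Basis of the centralizer. -/
noncomputable def v (a : Fin 16) : LieAlgebra.f₄ ℂ := ev b (V a)

lemma ck_V : ∀ a : Fin 16, ∀ p ∈ V a, p.1 < 52 := by decide +kernel
lemma ck_VM : ∀ a : Fin 16, isZ (act M (V a) ++ sca (-1) (VM a)) = true := by decide +kernel
lemma ck_VMe : ∀ a : Fin 16, isZ (com (VM a) (act M le)) = true := by decide +kernel

lemma ρ_v (a : Fin 16) : ρ (v a) = ev U (VM a) := by
  rw [v, ρ_ev (ck_V a)]; exact ev_eq_of_isZ U (ck_VM a)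

lemma v_mem (a : Fin 16) : ⁅v a, e⁆ = 0 := ρ_inj <| by
  rw [LieHom.map_lie, ρ_v, ρ_e, ← ev_com, ev_eq_zero U (ck_VMe a), map_zero]

lemma ck_fr : ∀ a : Fin 16, fr a < 52 := by decide +kernel
lemma ck_ind : ∀ a c : Fin 16, cf (V c) (fr a) = if c = a then sv a else 0 := by decide +kernel
lemma ck_sv : ∀ a : Fin 16, sv a ≠ 0 := by decide +kernel

lemma v_ind : LinearIndependent ℂ v := by
  rw [Fintype.linearIndependent_iff]
  intro t ht a
  have := congrArg (crd (fr a)) ht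
  rw [map_sum, map_zero] at this
  simp only [map_smul, v, crd_ev (ck_fr a) (ck_V _), ck_ind] at this
  simpa [ck_sv] using this

/-- Contribution of the free coordinates. -/
def fre (m l : ℕ) : ℤ :=
  (List.finRange 16).foldr (fun (a : Fin 16) s => (if l = fr a then 12 / sv a * cf (V a) m else 0) + s) 0

lemma ck_cert : ∀ l < 52, ∀ m < 52,
    pair (Psi m) (com (M l) (act M le)) + fre m l = if l = m then 12 else 0 := by decide +kernel

lemma foldr_fin {N : Type*} [AddCommMonoid N] (g : Fin 16 → N) :
    (List.finRange 16).foldr (fun a s => g a + s) 0 = ∑ a, g a := by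
  rw [Fin.sum_univ_def]
  generalize List.finRange 16 = L
  induction L with
  | nil => simp
  | cons a L ih => simp [ih]

lemma cent_eq {y : LieAlgebra.f₄ ℂ} (hy : ⁅y, e⁆ = 0) :
    y = ∑ a : Fin 16, ((12 : ℂ)⁻¹ * (12 / sv a : ℤ) * crd (fr a) y) • v a := by
  refine ext_crd fun m hm => ?_
  have key := fun_ext (x := y)
    (α := fn (Psi m) ∘ₗ (ρ : LieAlgebra.f₄ ℂ →ₗ[ℂ] Module.End ℂ (ℕ →₀ ℂ)) ∘ₗ
        (-(LieAlgebra.ad ℂ _ e : LieAlgebra.f₄ ℂ →ₗ[ℂ] LieAlgebra.f₄ ℂ))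
      + ∑ a : Fin 16, ((12 / sv a * cf (V a) m : ℤ) : ℂ) • crd (fr a))
    (β := (12 : ℂ) • crd m) (fun l hl => by
      have h1 : (-(LieAlgebra.ad ℂ _ e : LieAlgebra.f₄ ℂ →ₗ[ℂ] LieAlgebra.f₄ ℂ)) (b l) = ⁅b l, e⁆ := by
        rw [LinearMap.neg_apply, LieAlgebra.ad_apply, lie_skew]
      have h2 : ρ ⁅b l, e⁆ = ev U (com (M l) (act M le)) := by
        rw [LieHom.map_lie, ρ_b hl, ρ_e, ev_com]
      have h3 := ck_cert l hl m hm
      rw [fre, foldr_fin] at h3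
      have h4 := congrArg (Int.cast : ℤ → ℂ) h3
      rw [LinearMap.add_apply, LinearMap.comp_apply, LinearMap.comp_apply, h1]
      show fn (Psi m) (ρ ⁅b l, e⁆) + _ = _
      rw [h2, fn_ev, LinearMap.sum_apply, LinearMap.smul_apply, crd_b hm hl]
      simp only [LinearMap.smul_apply, crd_b (ck_fr _) hl]
      push_cast at h4 ⊢
      simpa using h4)
  have h1 : (-(LieAlgebra.ad ℂ _ e : LieAlgebra.f₄ ℂ →ₗ[ℂ] LieAlgebra.f₄ ℂ)) y = 0 := by
    rw [LinearMap.neg_apply, LieAlgebra.ad_apply, lie_skew, hy]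
  rw [LinearMap.add_apply, LinearMap.comp_apply, LinearMap.comp_apply, h1, map_zero, map_zero,
    zero_add, LinearMap.sum_apply, LinearMap.smul_apply, smul_eq_mul] at key
  rw [map_sum]
  simp only [map_smul, smul_eq_mul, LinearMap.smul_apply, v, crd_ev hm (ck_V _)] at key ⊢
  rw [← mul_right_inj' (show (12 : ℂ) ≠ 0 by norm_num), ← key, Finset.mul_sum]
  refine Finset.sum_congr rfl fun a _ => ?_
  push_cast
  ring

lemma cent_span : (centralizerOf ℂ e).toSubmodule = Submodule.span ℂ (Set.range v) := by
  apply le_antisymm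
  · intro y hy
    rw [cent_eq (y := y) hy]
    exact Submodule.sum_mem _ fun a _ => Submodule.smul_mem _ _ (Submodule.subset_span ⟨a, rfl⟩)
  · rw [Submodule.span_le]
    rintro _ ⟨a, rfl⟩
    exact v_mem a

/-- The functional cutting out the derived subalgebra. -/
noncomputable def lam : LieAlgebra.f₄ ℂ →ₗ[ℂ] ℂ :=
  ent (1, 2) ∘ₗ (ρ : LieAlgebra.f₄ ℂ →ₗ[ℂ] Module.End ℂ (ℕ →₀ ℂ))

lemma lam_eq {x : LieAlgebra.f₄ ℂ} {l : SM} (h : ρ x = ev U l) : lam x = (cf l (1, 2) : ℂ) := by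
  show ent (1, 2) (ρ x) = _
  rw [h, ent_ev]

lemma ck_lam : ∀ a c : Fin 16, cf (com (VM a) (VM c)) (1, 2) = 0 := by decide +kernel
lemma ck_lam0 : ∀ a : Fin 16, cf (VM a) (1, 2) = if a = 0 then 1 else 0 := by decide +kernel
lemma ck_lame : cf (act M le) (1, 2) = 1 := by decide +kernel

lemma lam_e : lam e = 1 := by rw [lam_eq ρ_e, ck_lame]; simp
lemma lam_v (a : Fin 16) : lam (v a) = if a = 0 then 1 else 0 := by
  rw [lam_eq (ρ_v a), ck_lam0]; split_ifs <;> simp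
lemma lam_vv (a c : Fin 16) : lam ⁅v a, v c⁆ = 0 := by
  rw [lam_eq (l := com (VM a) (VM c)) (by rw [LieHom.map_lie, ρ_v, ρ_v, ev_com]), ck_lam]; simp

lemma lam_lie {y z : LieAlgebra.f₄ ℂ} (hy : y ∈ Submodule.span ℂ (Set.range v))
    (hz : z ∈ Submodule.span ℂ (Set.range v)) : lam ⁅y, z⁆ = 0 := by
  induction hy using Submodule.span_induction with
  | mem x hx =>
    obtain ⟨a, rfl⟩ := hx
    induction hz using Submodule.span_induction with
    | mem x hx =>
      obtain ⟨c, rfl⟩ := hx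
      exact lam_vv a c
    | zero => simp
    | add x y _ _ h1 h2 => rw [lie_add, map_add, h1, h2, add_zero]
    | smul t x _ h1 => rw [lie_smul, map_smul, h1, smul_zero]
  | zero => simp
  | add x y _ _ h1 h2 => rw [add_lie, map_add, h1, h2, add_zero]
  | smul t x _ h1 => rw [smul_lie, map_smul, h1, smul_zero]

lemma ck_br : ∀ a : Fin 15, (br (a + 1)).1 < 16 ∧ (br (a + 1)).2.1 < 16 ∧ (br (a + 1)).2.2 ≠ 0 ∧
    isZ (com (VM (br (a + 1)).1) (VM (br (a + 1)).2.1) ++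
      sca (-1) (sca (br (a + 1)).2.2 (VM (a + 1)))) = true := by decide +kernel

lemma v_succ_mem (a : Fin 15) : v a.succ ∈ derivedOf ℂ (centralizerOf ℂ e) := by
  obtain ⟨h1, h2, h3, h4⟩ := ck_br a
  have h5 : ⁅v ⟨_, h1⟩, v ⟨_, h2⟩⁆ = (br (a + 1)).2.2 • v a.succ := ρ_inj <| by
    rw [LieHom.map_lie, map_zsmul, ρ_v, ρ_v, ρ_v, ← ev_com]
    exact (ev_eq_of_isZ U h4).trans (ev_sca _ _ _)
  have h6 : v a.succ = ((br (a + 1)).2.2 : ℂ)⁻¹ • ⁅v ⟨_, h1⟩, v ⟨_, h2⟩⁆ := by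
    rw [h5, ← Int.cast_smul_eq_zsmul ℂ, inv_smul_smul₀ (Int.cast_ne_zero.2 h3)]
  rw [h6]
  exact Submodule.smul_mem _ _ (Submodule.subset_span ⟨_, v_mem _, _, v_mem _, rfl⟩)

lemma der_span : derivedOf ℂ (centralizerOf ℂ e)
    = Submodule.span ℂ (Set.range fun a : Fin 15 => v a.succ) := by
  apply le_antisymm
  · refine Submodule.span_le.2 ?_
    rintro _ ⟨y, hy, z, hz, rfl⟩
    have h1 : ⁅⁅y, z⁆, e⁆ = 0 := (centralizerOf ℂ e).lie_mem hy hz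
    rw [cent_span] at hy hz
    have h2 := lam_lie hy hz
    have h3 := cent_eq h1
    obtain ⟨t, h4⟩ : ∃ t : Fin 16 → ℂ, ⁅y, z⁆ = ∑ a, t a • v a := ⟨_, h3⟩
    have h5 : t 0 = 0 := by
      rw [h4, map_sum] at h2
      simpa [lam_v] using h2
    rw [SetLike.mem_coe, h4, Fin.sum_univ_succ, h5, zero_smul, zero_add]
    exact Submodule.sum_mem _ fun a _ => Submodule.smul_mem _ _ (Submodule.subset_span ⟨a, rfl⟩)
  · rw [Submodule.span_le]
    rintro _ ⟨a, rfl⟩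
    exact v_succ_mem a

lemma lam_der {x : LieAlgebra.f₄ ℂ} (hx : x ∈ derivedOf ℂ (centralizerOf ℂ e)) : lam x = 0 := by
  rw [der_span] at hx
  have : Submodule.span ℂ (Set.range fun a : Fin 15 => v a.succ) ≤ LinearMap.ker lam := by
    rw [Submodule.span_le]
    rintro _ ⟨a, rfl⟩
    exact (lam_v _).trans (if_neg (Fin.succ_ne_zero a))
  exact this hx

lemma e_notMem : e ∉ derivedOf ℂ (centralizerOf ℂ e) := fun he =>
  one_ne_zero (lam_e.symm.trans (lam_der he))

lemma e_eq : e = v 0 + v 1 := by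
  simp [e, v, le, V, tabV, add_assoc]

lemma sup_eq : (centralizerOf ℂ e).toSubmodule
    = Submodule.span ℂ {e} ⊔ derivedOf ℂ (centralizerOf ℂ e) := by
  apply le_antisymm
  · rw [cent_span, Submodule.span_le]
    rintro _ ⟨a, rfl⟩
    cases a using Fin.cases with
    | zero =>
      rw [SetLike.mem_coe, eq_sub_of_add_eq e_eq.symm]
      exact Submodule.sub_mem _ (Submodule.mem_sup_left (Submodule.mem_span_singleton_self e))
        (Submodule.mem_sup_right (v_succ_mem 0))
    | succ a => exact Submodule.mem_sup_right (v_succ_mem a)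
  · refine sup_le ?_ ?_
    · rw [Submodule.span_singleton_le_iff_mem]
      exact lie_self e
    · rw [der_span, cent_span]
      exact Submodule.span_mono (by rintro _ ⟨a, rfl⟩; exact ⟨_, rfl⟩)

lemma inf_eq : Submodule.span ℂ {e} ⊓ derivedOf ℂ (centralizerOf ℂ e) = ⊥ := by
  rw [Submodule.eq_bot_iff]
  rintro x ⟨h1, h2⟩
  obtain ⟨t, rfl⟩ := Submodule.mem_span_singleton.1 h1
  have := lam_der h2
  rw [map_smul, lam_e, smul_eq_mul, mul_one] at this
  rw [this, zero_smul]

end Triple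

end F4

/-- In the simple complex Lie algebra of type F₄ there is an `sl₂`-triple `(e,h,f)`
such that `dim g_e = 16`, `dim [g_e, g_e] = 15`, `e ∉ [g_e, g_e]`, and hence `g_e` is
the direct sum of the span of `e` and `[g_e, g_e]`. -/
theorem exists_sl2Triple_f₄ :
    ∃ e h f : LieAlgebra.f₄ ℂ, IsSl2Triple h e f ∧
      Module.finrank ℂ (centralizerOf ℂ e).toSubmodule = 16 ∧
      Module.finrank ℂ (derivedOf ℂ (centralizerOf ℂ e)) = 15 ∧
      e ∉ derivedOf ℂ (centralizerOf ℂ e) ∧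
      (centralizerOf ℂ e).toSubmodule
        = Submodule.span ℂ {e} ⊔ derivedOf ℂ (centralizerOf ℂ e) ∧
      Submodule.span ℂ {e} ⊓ derivedOf ℂ (centralizerOf ℂ e) = ⊥ := by
  refine ⟨F4.e, F4.h, F4.f, F4.triple, ?_, ?_, F4.e_notMem, F4.sup_eq, F4.inf_eq⟩
  · rw [F4.cent_span, finrank_span_eq_card F4.v_ind, Fintype.card_fin]
  · rw [F4.der_span]
    exact (finrank_span_eq_card (F4.v_ind.comp _ (Fin.succ_injective _))).trans (Fintype.card_fin _)

end PaperStmt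
end
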